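/- (Variational principle) Let Σ be a topologically mixing countable Markov shift and {log f_n} an almost-additive Bowen sequence with sup f_1 < ∞. Then P(F) = sup { h(μ) + lim_{n→∞} (1/n) ∫ log f_n dμ : μ ∈ M, lim_{n→∞} (1/n) ∫ log f_n dμ ≠ −∞ }, where M is the set of σ-invariant Borel probability measures and h(μ) is the Kolmogorov–Sinai entropy. -/

import Mathlib

open scoped ENNReal
open Filter MeasureTheory

noncomputable section

/-- The one-sided shift map on sequences. -/
def shf {S : Type*} : (ℕ → S) → (ℕ → S) := fun x i => x (i + 1)

/-- The countable Markov shift determined by the transition relation `T`. -/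
def shiftSpace {S : Type*} (T : S → S → Prop) : Set (ℕ → S) :=
  {x | ∀ i, T (x i) (x (i + 1))}


/-- The partition function `Z_n(F,a)`. -/
def ZFun {S : Type*} (T : S → S → Prop) (f : ℕ → (ℕ → S) → ℝ) (n : ℕ) (a : S) : ℝ≥0∞ :=
  ∑' x : {x : ℕ → S // x ∈ shiftSpace T ∧ shf^[n] x = x ∧ x 0 = a}, ENNReal.ofReal (f n x)


/-- The almost-additive Gurevich pressure (as a `limsup`; under the standing hypotheses
the limit exists and coincides with it). -/
def press {S : Type*} (T : S → S → Prop) (f : ℕ → (ℕ → S) → ℝ) (a : S) : EReal :=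
  Filter.atTop.limsup (fun n : ℕ => ENNReal.log (ZFun T f n a) / ((n : ℝ) : EReal))


/-- The asymptotic average `lim (1/n) ∫ log f_n dμ`, written as an extended real via the
positive/negative parts of `log f_n` (as a `limsup`). -/
def lyap {S : Type*} [MeasurableSpace S] (μ : Measure (ℕ → S)) (f : ℕ → (ℕ → S) → ℝ) : EReal :=
  Filter.atTop.limsup (fun n : ℕ =>
    ((↑(∫⁻ x, ENNReal.ofReal (Real.log (f n x)) ∂μ) : EReal) -
      (↑(∫⁻ x, ENNReal.ofReal (-Real.log (f n x)) ∂μ) : EReal)) / ((n : ℝ) : EReal))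


/-- Entropy of the refined partition of level `n` associated with a countable measurable
partition `P` (indexed by `ℕ`). -/
def blockEnt {S : Type*} [MeasurableSpace S] (μ : Measure (ℕ → S)) (P : (ℕ → S) → ℕ)
    (n : ℕ) : ℝ≥0∞ :=
  ∑' c : Fin n → ℕ,
    ENNReal.ofReal (Real.negMulLog ((μ {x | ∀ i : Fin n, P (shf^[(i : ℕ)] x) = c i}).toReal))

/-- Kolmogorov–Sinai entropy: supremum over finite measurable partitions of the
asymptotic block entropy (for invariant measures the limit equals the infimum). -/
def hKS {S : Type*} [MeasurableSpace S] (μ : Measure (ℕ → S)) : ℝ≥0∞ :=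
  ⨆ P : {P : (ℕ → S) → ℕ // Measurable P ∧ (Set.range P).Finite},
    ⨅ n : ℕ, blockEnt μ (P : (ℕ → S) → ℕ) (n + 1) / ((n : ℝ≥0∞) + 1)


/-- Entropy of a map with values in a finite type. -/
def vpEnt {Ω ι : Type*} [MeasurableSpace Ω] [Fintype ι] (m : Measure Ω) (g : Ω → ι) : ℝ :=
  ∑ c, Real.negMulLog (m.real (g ⁻¹' {c}))

lemma vp_integral_comp {Ω ι : Type*} [MeasurableSpace Ω] [Fintype ι] (m : Measure Ω)
    [IsProbabilityMeasure m] (g : Ω → ι) (hg : ∀ c, MeasurableSet (g ⁻¹' {c})) (φ : ι → ℝ) :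
    Integrable (fun ω => φ (g ω)) m ∧ ∫ ω, φ (g ω) ∂m = ∑ c, m.real (g ⁻¹' {c}) * φ c := by
  classical
  have h1 : (fun ω => φ (g ω)) =
      fun ω => ∑ c, (g ⁻¹' {c}).indicator (fun _ => φ c) ω := by
    funext ω
    rw [Finset.sum_eq_single (g ω)]
    · simp
    · intro b _ hb
      simp [Set.indicator, hb.symm]
    · simp
  have hi : ∀ c, Integrable ((g ⁻¹' {c}).indicator (fun _ => φ c)) m := fun c =>
    (integrable_const (φ c)).indicator (hg c)
  rw [h1]
  refine ⟨integrable_finset_sum _ fun c _ => hi c, ?_⟩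
  rw [integral_finset_sum _ fun c _ => hi c]
  refine Finset.sum_congr rfl fun c _ => ?_
  rw [integral_indicator_const _ (hg c)]
  simp

lemma vp_sum_prob {Ω ι : Type*} [MeasurableSpace Ω] [Fintype ι] (m : Measure Ω)
    [IsProbabilityMeasure m] (g : Ω → ι) (hg : ∀ c, MeasurableSet (g ⁻¹' {c})) :
    ∑ c, m.real (g ⁻¹' {c}) = 1 := by
  have := (vp_integral_comp m g hg (fun _ => 1)).2
  simpa using this.symm

lemma vp_gibbs {ι : Type*} [Fintype ι] (p q : ι → ℝ) (hp : ∀ c, 0 ≤ p c) (hp1 : ∑ c, p c = 1)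
    (hq1 : ∑ c, q c ≤ 1) (hq0 : ∀ c, 0 ≤ q c) (hpq : ∀ c, p c ≠ 0 → 0 < q c) :
    ∑ c, Real.negMulLog (p c) ≤ ∑ c, p c * (-Real.log (q c)) := by
  have h : ∀ c, Real.negMulLog (p c) - p c * (-Real.log (q c)) ≤ q c - p c := by
    intro c
    by_cases h0 : p c = 0
    · simp [h0, hq0]
    · have hpc : 0 < p c := lt_of_le_of_ne (hp c) (Ne.symm h0)
      have hqc := hpq c h0
      have := Real.log_le_sub_one_of_pos (div_pos hqc hpc)
      rw [Real.log_div hqc.ne' hpc.ne'] at this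
      have h2 := mul_le_mul_of_nonneg_left this hpc.le
      have h3 : p c * (q c / p c - 1) = q c - p c := by field_simp
      rw [h3] at h2
      unfold Real.negMulLog
      linarith
  have := Finset.sum_le_sum fun c (_ : c ∈ Finset.univ) => h c
  rw [Finset.sum_sub_distrib, Finset.sum_sub_distrib] at this
  linarith

lemma vpEnt_le {Ω ι : Type*} [MeasurableSpace Ω] [Fintype ι] (m : Measure Ω)
    [IsProbabilityMeasure m] (g : Ω → ι) (hg : ∀ c, MeasurableSet (g ⁻¹' {c})) (q : ι → ℝ)
    (hq1 : ∑ c, q c ≤ 1) (hq0 : ∀ c, 0 ≤ q c) (hpq : ∀ c, m.real (g ⁻¹' {c}) ≠ 0 → 0 < q c) :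
    vpEnt m g ≤ ∫ ω, -Real.log (q (g ω)) ∂m := by
  rw [(vp_integral_comp m g hg (fun c => -Real.log (q c))).2]
  exact vp_gibbs _ q (fun _ => measureReal_nonneg) (vp_sum_prob m g hg) hq1 hq0 hpq

lemma vpEnt_eq {Ω ι : Type*} [MeasurableSpace Ω] [Fintype ι] (m : Measure Ω)
    [IsProbabilityMeasure m] (g : Ω → ι) (hg : ∀ c, MeasurableSet (g ⁻¹' {c})) :
    vpEnt m g = ∫ ω, -Real.log (m.real (g ⁻¹' {g ω})) ∂m := by
  rw [(vp_integral_comp m g hg (fun c => -Real.log (m.real (g ⁻¹' {c})))).2]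
  unfold vpEnt Real.negMulLog
  exact Finset.sum_congr rfl fun c _ => by ring

lemma vpEnt_nonneg {Ω ι : Type*} [MeasurableSpace Ω] [Fintype ι] (m : Measure Ω)
    [IsProbabilityMeasure m] (g : Ω → ι) : 0 ≤ vpEnt m g :=
  Finset.sum_nonneg fun _ _ => Real.negMulLog_nonneg measureReal_nonneg measureReal_le_one

lemma vpEnt_equiv {Ω ι κ : Type*} [MeasurableSpace Ω] [Fintype ι] [Fintype κ] (m : Measure Ω)
    (g : Ω → ι) (e : ι ≃ κ) : vpEnt m (fun ω => e (g ω)) = vpEnt m g := by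
  unfold vpEnt
  rw [← Equiv.sum_comp e]
  refine Finset.sum_congr rfl fun c _ => ?_
  congr 3
  ext ω
  simp

lemma vpEnt_prod {Ω ι κ : Type*} [MeasurableSpace Ω] [Fintype ι] [Fintype κ] (m : Measure Ω)
    [IsProbabilityMeasure m] (g : Ω → ι) (hg : ∀ c, MeasurableSet (g ⁻¹' {c}))
    (h : Ω → κ) (hh : ∀ c, MeasurableSet (h ⁻¹' {c})) :
    vpEnt m (fun ω => (g ω, h ω)) ≤ vpEnt m g + vpEnt m h := by
  have hset : ∀ c : ι × κ, (fun ω => (g ω, h ω)) ⁻¹' {c} = g ⁻¹' {c.1} ∩ h ⁻¹' {c.2} := by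
    intro c; ext ω; simp [Prod.ext_iff]
  have hgh : ∀ c : ι × κ, MeasurableSet ((fun ω => (g ω, h ω)) ⁻¹' {c}) := by
    intro c; rw [hset]; exact (hg _).inter (hh _)
  have key := vpEnt_le m (fun ω => (g ω, h ω)) hgh
    (fun c => m.real (g ⁻¹' {c.1}) * m.real (h ⁻¹' {c.2})) (by
      rw [Fintype.sum_prod_type]
      simp only [← Finset.mul_sum, vp_sum_prob m h hh, vp_sum_prob m g hg, mul_one, le_refl])
    (fun c => mul_nonneg measureReal_nonneg measureReal_nonneg) (by
      intro c hc
      have h0 : 0 < m.real ((fun ω => (g ω, h ω)) ⁻¹' {c}) :=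
        lt_of_le_of_ne measureReal_nonneg (Ne.symm hc)
      rw [hset] at h0
      exact mul_pos (h0.trans_le (measureReal_mono Set.inter_subset_left))
        (h0.trans_le (measureReal_mono Set.inter_subset_right)))
  refine key.trans (le_of_eq ?_)
  rw [vpEnt_eq m g hg, vpEnt_eq m h hh]
  rw [← integral_add (vp_integral_comp m g hg (fun c => -Real.log (m.real (g ⁻¹' {c})))).1
    (vp_integral_comp m h hh (fun c => -Real.log (m.real (h ⁻¹' {c})))).1]
  have hae : ∀ᵐ ω ∂m, 0 < m.real ((fun ω => (g ω, h ω)) ⁻¹' {(g ω, h ω)}) := by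
    have : {ω | ¬ 0 < m.real ((fun ω => (g ω, h ω)) ⁻¹' {(g ω, h ω)})} ⊆
        ⋃ c ∈ {c : ι × κ | m ((fun ω => (g ω, h ω)) ⁻¹' {c}) = 0},
          (fun ω => (g ω, h ω)) ⁻¹' {c} := by
      intro ω hω
      simp only [Set.mem_iUnion]
      refine ⟨(g ω, h ω), ?_, rfl⟩
      have h0 : m.real ((fun ω => (g ω, h ω)) ⁻¹' {(g ω, h ω)}) = 0 :=
        le_antisymm (not_lt.1 hω) measureReal_nonneg
      exact (measureReal_eq_zero_iff).1 h0
    refine measure_mono_null this ?_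
    rw [measure_biUnion_null_iff (Set.to_countable _)]
    intro c hc
    exact hc
  refine integral_congr_ae ?_
  filter_upwards [hae] with ω hω
  rw [hset] at hω
  have h1 := hω.trans_le (measureReal_mono Set.inter_subset_left)
  have h2 := hω.trans_le (measureReal_mono Set.inter_subset_right)
  simp only at h1 h2 ⊢
  rw [Real.log_mul h1.ne' h2.ne']
  ring

/-- Block map of a finite-valued partition function. -/
def vpBlk {S : Type*} (P : (ℕ → S) → ℕ) (R : Finset ℕ) (hR : ∀ x, P x ∈ R) (n : ℕ)
    (x : ℕ → S) : Fin n → R := fun i => ⟨P (shf^[(i : ℕ)] x), hR _⟩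

lemma vp_shf_iter {S : Type*} (n : ℕ) (x : ℕ → S) (i : ℕ) : (shf^[n] x) i = x (i + n) := by
  induction n generalizing x with
  | zero => rfl
  | succ k ih =>
    rw [Function.iterate_succ_apply, ih]
    simp [shf, add_assoc]

lemma vp_meas_shf {S : Type*} [MeasurableSpace S] : Measurable (shf : (ℕ → S) → (ℕ → S)) :=
  measurable_pi_lambda _ fun i => measurable_pi_apply (i + 1)

lemma vp_meas_iter {S : Type*} [MeasurableSpace S] (n : ℕ) :
    Measurable (shf^[n] : (ℕ → S) → (ℕ → S)) := vp_meas_shf.iterate n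

lemma vpBlk_meas {S : Type*} [MeasurableSpace S] (P : (ℕ → S) → ℕ) (hP : Measurable P)
    (R : Finset ℕ) (hR : ∀ x, P x ∈ R) (n : ℕ) (c : Fin n → R) :
    MeasurableSet (vpBlk P R hR n ⁻¹' {c}) := by
  have : vpBlk P R hR n ⁻¹' {c} = ⋂ i : Fin n, (fun x => P (shf^[(i : ℕ)] x)) ⁻¹' {(c i : ℕ)} := by
    ext x
    simp [vpBlk, funext_iff, Subtype.ext_iff]
  rw [this]
  exact MeasurableSet.iInter fun i => (hP.comp (vp_meas_iter i)) (MeasurableSet.singleton _)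

lemma vp_blockEnt {S : Type*} [MeasurableSpace S] (μ : Measure (ℕ → S)) [IsProbabilityMeasure μ]
    (P : (ℕ → S) → ℕ) (R : Finset ℕ) (hR : ∀ x, P x ∈ R) (n : ℕ) :
    blockEnt μ P n = ENNReal.ofReal (vpEnt μ (vpBlk P R hR n)) := by
  unfold blockEnt vpEnt
  have hinj : Function.Injective (fun (c : Fin n → R) (i : Fin n) => (c i : ℕ)) := by
    intro c d h
    funext i
    exact Subtype.ext (congrFun h i)
  rw [← hinj.tsum_eq]
  · rw [tsum_fintype, ENNReal.ofReal_sum_of_nonneg]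
    · refine Finset.sum_congr rfl fun c _ => ?_
      congr 3
      congr 1
      ext x
      simp [vpBlk, funext_iff, Subtype.ext_iff]
    · intro c _
      exact Real.negMulLog_nonneg measureReal_nonneg measureReal_le_one
  · intro c hc
    by_contra hcon
    apply hc
    have : {x | ∀ i : Fin n, P (shf^[(i : ℕ)] x) = c i} = ∅ := by
      ext x
      simp only [Set.mem_setOf_eq, Set.mem_empty_iff_false, iff_false]
      intro hx
      apply hcon
      refine ⟨fun i => ⟨c i, ?_⟩, rfl⟩
      rw [← hx i]; exact hR _
    simp [this]

lemma vpEnt_comp {Ω Ω' ι : Type*} [MeasurableSpace Ω] [MeasurableSpace Ω'] [Fintype ι]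
    (m : Measure Ω) (φ : Ω → Ω') (hφ : Measurable φ) (g : Ω' → ι)
    (hg : ∀ c, MeasurableSet (g ⁻¹' {c})) :
    vpEnt (m.map φ) g = vpEnt m (fun ω => g (φ ω)) := by
  unfold vpEnt
  refine Finset.sum_congr rfl fun c _ => ?_
  rw [map_measureReal_apply hφ (hg c)]
  rfl

lemma vp_inv_iter {S : Type*} [MeasurableSpace S] (μ : Measure (ℕ → S))
    (hinv : ∀ s : Set (ℕ → S), MeasurableSet s → μ (shf ⁻¹' s) = μ s) (n : ℕ) :
    μ.map (shf^[n]) = μ := by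
  induction n with
  | zero => simp
  | succ k ih =>
    rw [Function.iterate_succ, ← Measure.map_map (vp_meas_iter k) vp_meas_shf]
    have : μ.map shf = μ := by
      ext s hs
      rw [Measure.map_apply vp_meas_shf hs, hinv s hs]
    rw [this, ih]

lemma vpEnt_subadd {S : Type*} [MeasurableSpace S] (μ : Measure (ℕ → S)) [IsProbabilityMeasure μ]
    (hinv : ∀ s : Set (ℕ → S), MeasurableSet s → μ (shf ⁻¹' s) = μ s)
    (P : (ℕ → S) → ℕ) (hP : Measurable P) (R : Finset ℕ) (hR : ∀ x, P x ∈ R) (a b : ℕ) :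
    vpEnt μ (vpBlk P R hR (a + b)) ≤ vpEnt μ (vpBlk P R hR a) + vpEnt μ (vpBlk P R hR b) := by
  have h1 : vpBlk P R hR (a + b) =
      fun x => Fin.appendEquiv a b (vpBlk P R hR a x, vpBlk P R hR b (shf^[a] x)) := by
    funext x i
    refine Fin.addCases (fun i => ?_) (fun i => ?_) i
    · simp [Fin.appendEquiv, vpBlk]
    · simp [Fin.appendEquiv, vpBlk, ← Function.iterate_add_apply, add_comm]
  have h2 : vpEnt μ (vpBlk P R hR b) = vpEnt μ (fun x => vpBlk P R hR b (shf^[a] x)) := by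
    conv_lhs => rw [← vp_inv_iter μ hinv a]
    exact vpEnt_comp μ _ (vp_meas_iter a) _ (vpBlk_meas P hP R hR b)
  rw [h1, vpEnt_equiv, h2]
  refine vpEnt_prod μ _ (vpBlk_meas P hP R hR a) _ fun c => ?_
  exact vp_meas_iter a (vpBlk_meas P hP R hR b c)

lemma vpEnt_mul {S : Type*} [MeasurableSpace S] (μ : Measure (ℕ → S)) [IsProbabilityMeasure μ]
    (hinv : ∀ s : Set (ℕ → S), MeasurableSet s → μ (shf ⁻¹' s) = μ s)
    (P : (ℕ → S) → ℕ) (hP : Measurable P) (R : Finset ℕ) (hR : ∀ x, P x ∈ R) (a k : ℕ) :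
    vpEnt μ (vpBlk P R hR (k * a)) ≤ k * vpEnt μ (vpBlk P R hR a) := by
  induction k with
  | zero =>
    rw [Nat.zero_mul]
    have h : vpEnt μ (vpBlk P R hR 0) = 0 := by
      rw [vpEnt_eq μ _ (vpBlk_meas P hP R hR 0)]
      have : ∀ x, vpBlk P R hR 0 ⁻¹' {vpBlk P R hR 0 x} = Set.univ := by
        intro x; ext y; simp [eq_iff_true_of_subsingleton]
      simp [this]
    simp [h]
  | succ k ih =>
    rw [Nat.succ_mul]
    refine (vpEnt_subadd μ hinv P hP R hR _ _).trans ?_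
    push_cast
    linarith


lemma vp_approx_set {S : Type*} [MeasurableSpace S] (μ : Measure (ℕ → S)) [IsProbabilityMeasure μ]
    (s : Set (ℕ → S)) (hs : MeasurableSet s) (ε : ℝ≥0∞) (hε : 0 < ε) :
    ∃ t, (MeasurableSet t ∧ ∃ k : ℕ, ∀ x y : ℕ → S, (∀ i < k, x i = y i) → (x ∈ t ↔ y ∈ t)) ∧
      μ (symmDiff t s) < ε := by
  let 𝒞 : Set (Set (ℕ → S)) :=
    {t | MeasurableSet t ∧ ∃ k : ℕ, ∀ x y : ℕ → S, (∀ i < k, x i = y i) → (x ∈ t ↔ y ∈ t)}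
  have hring : IsSetRing 𝒞 := by
    refine ⟨⟨MeasurableSet.empty, 0, by simp⟩, ?_, ?_⟩
    · rintro A B ⟨hA, k, hk⟩ ⟨hB, l, hl⟩
      refine ⟨hA.union hB, max k l, fun x y h => ?_⟩
      have h1 := hk x y fun i hi => h i (lt_max_of_lt_left hi)
      have h2 := hl x y fun i hi => h i (lt_max_of_lt_right hi)
      simp [h1, h2]
    · rintro A B ⟨hA, k, hk⟩ ⟨hB, l, hl⟩
      refine ⟨hA.diff hB, max k l, fun x y h => ?_⟩
      have h1 := hk x y fun i hi => h i (lt_max_of_lt_left hi)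
      have h2 := hl x y fun i hi => h i (lt_max_of_lt_right hi)
      simp [h1, h2]
  have hgen : (MeasurableSpace.pi : MeasurableSpace (ℕ → S)) = MeasurableSpace.generateFrom 𝒞 := by
    apply le_antisymm
    · refine iSup_le fun i => ?_
      rintro _ ⟨u, hu, rfl⟩
      apply MeasurableSpace.measurableSet_generateFrom
      refine ⟨measurable_pi_apply i hu, i + 1, fun x y h => ?_⟩
      simp [h i (Nat.lt_succ_self i)]
    · exact MeasurableSpace.generateFrom_le fun t ht => ht.1
  exact exists_measure_symmDiff_lt_of_generateFrom_isSetRing hring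
    ⟨{Set.univ}, Set.countable_singleton _, by
      rintro _ rfl
      exact ⟨MeasurableSet.univ, 0, by simp⟩, by simp⟩ hgen hs hε

/-- Approximation of a finite partition by a cylinder partition. -/
lemma vp_approx {S : Type*} [MeasurableSpace S] (μ : Measure (ℕ → S)) [IsProbabilityMeasure μ]
    (P : (ℕ → S) → ℕ) (hP : Measurable P) (R : Finset ℕ) (hR : ∀ x, P x ∈ R) (η : ℝ)
    (hη : 0 < η) :
    ∃ (γ : (ℕ → S) → ℕ) (k : ℕ) (D : Set (ℕ → S)), MeasurableSet D ∧ μ.real D ≤ η ∧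
      (∀ x, x ∉ D → γ x = P x) ∧ ∀ x y : ℕ → S, (∀ i < k, x i = y i) → γ x = γ y := by
  classical
  have hmpos : 0 < η / (R.card + 1) := by positivity
  have h := fun r : ℕ => vp_approx_set μ (P ⁻¹' {r}) (hP (MeasurableSet.singleton r))
    (ENNReal.ofReal (η / (R.card + 1))) (ENNReal.ofReal_pos.2 hmpos)
  choose t ht hμ using h
  have ht2 := fun r => (ht r).2
  choose k hk using ht2
  refine ⟨fun x => if h : ∃ r, r ∈ R ∧ x ∈ t r then Nat.find h else 0, R.sup k,
    ⋃ r ∈ R, symmDiff (t r) (P ⁻¹' {r}), ?_, ?_, ?_, ?_⟩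
  · exact Finset.measurableSet_biUnion _ fun r _ =>
      (ht r).1.symmDiff (hP (MeasurableSet.singleton r))
  · refine (measureReal_biUnion_finset_le _ _).trans ?_
    calc ∑ r ∈ R, μ.real (symmDiff (t r) (P ⁻¹' {r}))
        ≤ ∑ r ∈ R, η / (R.card + 1) := Finset.sum_le_sum fun r _ =>
          ENNReal.toReal_le_of_le_ofReal hmpos.le (hμ r).le
      _ = R.card * (η / (R.card + 1)) := by simp
      _ ≤ η := by
        rw [mul_div_assoc', div_le_iff₀ (by positivity)]
        nlinarith
  · intro x hx
    have hx' : ∀ r ∈ R, (x ∈ t r ↔ P x = r) := by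
      intro r hr
      simp only [Set.mem_iUnion, not_exists] at hx
      have := hx r hr
      rw [Set.mem_symmDiff] at this
      simp only [Set.mem_preimage, Set.mem_singleton_iff] at this
      tauto
    have hex : ∃ r, r ∈ R ∧ x ∈ t r := ⟨P x, hR x, (hx' _ (hR x)).2 rfl⟩
    simp only [dif_pos hex]
    have := Nat.find_spec hex
    exact ((hx' _ this.1).1 this.2).symm
  · intro x y hxy
    have h1 : ∀ r, (r ∈ R ∧ x ∈ t r) ↔ (r ∈ R ∧ y ∈ t r) := by
      intro r
      refine and_congr_right fun hr => hk r x y fun i hi => hxy i ?_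
      exact hi.trans_le (Finset.le_sup (f := k) hr)
    have h2 : (fun r => r ∈ R ∧ x ∈ t r) = (fun r => r ∈ R ∧ y ∈ t r) := by
      funext r; exact propext (h1 r)
    simp only [h1]

lemma vp_tight {S : Type*} [Countable S] [MeasurableSpace S] [MeasurableSingletonClass S]
    (μ : Measure (ℕ → S)) [IsProbabilityMeasure μ] (ε : ℝ) (hε : 0 < ε) :
    ∃ F : Finset S, μ.real {x | x 0 ∉ F} ≤ ε := by
  obtain ⟨e, he⟩ := Countable.exists_injective_nat S
  have hm : ∀ j : ℕ, MeasurableSet {x : ℕ → S | j ≤ e (x 0)} := fun j =>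
    (measurable_pi_apply (X := fun _ : ℕ => S) 0)
      (MeasurableSet.of_discrete (s := {s : S | j ≤ e s}))
  have ht := tendsto_measure_iInter_atTop (μ := μ) (s := fun j : ℕ => {x : ℕ → S | j ≤ e (x 0)})
    (fun j => (hm j).nullMeasurableSet)
    (fun i j hij x hx => le_trans hij hx) ⟨0, measure_ne_top _ _⟩
  have he0 : (⋂ j : ℕ, {x : ℕ → S | j ≤ e (x 0)}) = ∅ := by
    ext x
    simp only [Set.mem_iInter, Set.mem_setOf_eq, Set.mem_empty_iff_false, iff_false, not_forall,
      not_le]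
    exact ⟨e (x 0) + 1, Nat.lt_succ_self _⟩
  rw [he0, measure_empty] at ht
  obtain ⟨j, hj⟩ := (ht.eventually_le_const (ENNReal.ofReal_pos.2 hε)).exists
  have hfin : (e ⁻¹' (Set.Iio j)).Finite := (Set.finite_Iio j).preimage he.injOn
  refine ⟨hfin.toFinset, ?_⟩
  have : {x : ℕ → S | x 0 ∉ hfin.toFinset} = {x : ℕ → S | j ≤ e (x 0)} := by
    ext x; simp
  rw [this]
  exact ENNReal.toReal_le_of_le_ofReal hε.le hj

/-- Standing hypotheses, in logarithmic form. -/
structure VPHyp {S : Type*} (T : S → S → Prop) (f : ℕ → (ℕ → S) → ℝ) (D C E : ℝ) : Prop where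
  mix : ∀ a b : S, ∃ N : ℕ, ∀ n > N, ∃ x ∈ shiftSpace T, x 0 = a ∧ x n = b
  pos : ∀ n, 0 < n → ∀ x ∈ shiftSpace T, 0 < f n x
  bow : ∀ n, 0 < n → ∀ x ∈ shiftSpace T, ∀ y ∈ shiftSpace T,
      (∀ i < n, x i = y i) → Real.log (f n x) ≤ D + Real.log (f n y)
  lo : ∀ n m, 0 < n → 0 < m → ∀ x ∈ shiftSpace T,
      Real.log (f n x) + Real.log (f m (shf^[n] x)) ≤ C + Real.log (f (n + m) x)
  up : ∀ n m, 0 < n → 0 < m → ∀ x ∈ shiftSpace T,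
      Real.log (f (n + m) x) ≤ C + (Real.log (f n x) + Real.log (f m (shf^[n] x)))
  E0 : 0 ≤ E
  bd : ∀ n, 0 < n → ∀ x ∈ shiftSpace T, Real.log (f n x) ≤ n * E

lemma vp_shf_mem {S : Type*} {T : S → S → Prop} {x : ℕ → S} (hx : x ∈ shiftSpace T) (n : ℕ) :
    shf^[n] x ∈ shiftSpace T := by
  intro i
  rw [vp_shf_iter, vp_shf_iter]
  have := hx (i + n)
  rwa [show i + 1 + n = i + n + 1 by ring]

lemma vp_hyp {S : Type*} (T : S → S → Prop)
    (hmix : ∀ a b : S, ∃ N : ℕ, ∀ n > N, ∃ x ∈ shiftSpace T, x 0 = a ∧ x n = b)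
    (f : ℕ → (ℕ → S) → ℝ) (M C : ℝ) (hM : 0 < M) (hC : 0 ≤ C)
    (hpos : ∀ n, 0 < n → ∀ x ∈ shiftSpace T, 0 < f n x)
    (hBowen : ∀ n, 0 < n → ∀ x ∈ shiftSpace T, ∀ y ∈ shiftSpace T,
      (∀ i < n, x i = y i) → f n x ≤ M * f n y)
    (hAA : ∀ n m, 0 < n → 0 < m → ∀ x ∈ shiftSpace T,
      f n x * f m (shf^[n] x) * Real.exp (-C) ≤ f (n + m) x ∧
        f (n + m) x ≤ Real.exp C * (f n x * f m (shf^[n] x)))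
    (hsup : ∃ K : ℝ, ∀ x ∈ shiftSpace T, f 1 x ≤ K) :
    ∃ E, VPHyp T f (Real.log M) C E := by
  obtain ⟨K, hK⟩ := hsup
  have hup : ∀ n m, 0 < n → 0 < m → ∀ x ∈ shiftSpace T,
      Real.log (f (n + m) x) ≤ C + (Real.log (f n x) + Real.log (f m (shf^[n] x))) := by
    intro n m hn hm x hx
    have h1 := hpos n hn x hx
    have h2 := hpos m hm _ (vp_shf_mem hx n)
    have h3 := hpos (n + m) (by omega) x hx
    have := Real.log_le_log h3 (hAA n m hn hm x hx).2
    rwa [Real.log_mul (Real.exp_pos _).ne' (mul_pos h1 h2).ne', Real.log_exp,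
      Real.log_mul h1.ne' h2.ne'] at this
  refine ⟨C + Real.log (max K 1), hmix, hpos, ?_, ?_, hup, ?_, ?_⟩
  · intro n hn x hx y hy hxy
    have := Real.log_le_log (hpos n hn x hx) (hBowen n hn x hx y hy hxy)
    rwa [Real.log_mul hM.ne' (hpos n hn y hy).ne'] at this
  · intro n m hn hm x hx
    have h1 := hpos n hn x hx
    have h2 := hpos m hm _ (vp_shf_mem hx n)
    have := Real.log_le_log (mul_pos (mul_pos h1 h2) (Real.exp_pos _)) (hAA n m hn hm x hx).1
    rw [Real.log_mul (mul_pos h1 h2).ne' (Real.exp_pos _).ne', Real.log_exp,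
      Real.log_mul h1.ne' h2.ne'] at this
    linarith
  · have := Real.log_nonneg (le_max_right K 1)
    linarith
  · have hL := Real.log_nonneg (le_max_right K 1)
    have hone : ∀ x ∈ shiftSpace T, Real.log (f 1 x) ≤ Real.log (max K 1) := fun x hx =>
      Real.log_le_log (hpos 1 one_pos x hx) ((hK x hx).trans (le_max_left _ _))
    intro n hn
    induction n, hn using Nat.le_induction with
    | base =>
      intro x hx
      have := hone x hx
      push_cast
      linarith
    | succ n hn ih =>
      intro x hx
      have h1 := hup n 1 hn one_pos x hx
      have h2 := ih x hx
      have h3 := hone _ (vp_shf_mem hx n)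
      push_cast
      linarith

/-- Gluing of two sequences at position `n`. -/
def vpGlue {S : Type*} (n : ℕ) (x y : ℕ → S) : ℕ → S := fun i => if i < n then x i else y (i - n)

lemma vpGlue_lt {S : Type*} {n i : ℕ} (x y : ℕ → S) (h : i < n) : vpGlue n x y i = x i := by
  simp [vpGlue, h]

lemma vpGlue_add {S : Type*} (n i : ℕ) (x y : ℕ → S) : vpGlue n x y (n + i) = y i := by
  simp [vpGlue]

lemma vpGlue_mem {S : Type*} {T : S → S → Prop} {n : ℕ} {x y : ℕ → S} (hx : x ∈ shiftSpace T)
    (hy : y ∈ shiftSpace T) (h : x n = y 0) : vpGlue n x y ∈ shiftSpace T := by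
  intro i
  rcases lt_trichotomy (i + 1) n with h1 | h1 | h1
  · rw [vpGlue_lt _ _ h1, vpGlue_lt _ _ (by omega)]
    exact hx i
  · subst h1
    have := vpGlue_add (i + 1) 0 x y
    rw [add_zero] at this
    rw [vpGlue_lt _ _ (Nat.lt_succ_self i), this, ← h]
    exact hx i
  · obtain ⟨j, rfl⟩ := Nat.exists_eq_add_of_le (show n ≤ i by omega)
    rw [add_assoc, vpGlue_add, vpGlue_add]
    exact hy j

/-- Periodisation. -/
def vpPer {S : Type*} (n : ℕ) (x : ℕ → S) : ℕ → S := fun i => x (i % n)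

lemma vpPer_mem {S : Type*} {T : S → S → Prop} {n : ℕ} (hn : 0 < n) {x : ℕ → S}
    (hx : x ∈ shiftSpace T) (h : x n = x 0) : vpPer n x ∈ shiftSpace T := by
  intro i
  have hlt := Nat.mod_lt i hn
  have h2 : (i + 1) % n = (i % n + 1) % n := (Nat.mod_add_mod i n 1).symm
  have h3 := hx (i % n)
  unfold vpPer
  rw [h2]
  rcases Nat.lt_or_ge (i % n + 1) n with h1 | h1
  · rwa [Nat.mod_eq_of_lt h1]
  · have h4 : i % n + 1 = n := by omega
    rw [h4] at h3 ⊢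
    rwa [Nat.mod_self, ← h]

lemma vpPer_lt {S : Type*} {n i : ℕ} (x : ℕ → S) (h : i < n) : vpPer n x i = x i := by
  simp [vpPer, Nat.mod_eq_of_lt h]

lemma vpPer_iter {S : Type*} (n : ℕ) (x : ℕ → S) : shf^[n] (vpPer n x) = vpPer n x := by
  funext i
  rw [vp_shf_iter]
  simp [vpPer]

lemma vp_glue {S : Type*} {T : S → S → Prop} {f : ℕ → (ℕ → S) → ℝ} {D C E : ℝ}
    (H : VPHyp T f D C E) (a : S) (F : Finset S) :
    ∃ (l L : ℕ) (c : ℝ), ∀ N, 0 < N → ∀ x ∈ shiftSpace T, x 0 ∈ F → x N ∈ F →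
      ∃ z ∈ shiftSpace T, shf^[N + L] z = z ∧ z 0 = a ∧ (∀ i ≤ N, z (l + i) = x i) ∧
        Real.log (f N x) ≤ c + Real.log (f (N + L) z) := by
  classical
  have h1 : ∃ l, 0 < l ∧ ∀ p ∈ F, ∃ u ∈ shiftSpace T, u 0 = a ∧ u l = p := by
    choose N hN using fun p => H.mix a p
    exact ⟨F.sup N + 1, Nat.succ_pos _, fun p hp =>
      hN p _ (Nat.lt_succ_of_le (Finset.le_sup (f := N) hp))⟩
  have h2 : ∃ l, 0 < l ∧ ∀ p ∈ F, ∃ u ∈ shiftSpace T, u 0 = p ∧ u l = a := by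
    choose N hN using fun p => H.mix p a
    exact ⟨F.sup N + 1, Nat.succ_pos _, fun p hp =>
      hN p _ (Nat.lt_succ_of_le (Finset.le_sup (f := N) hp))⟩
  obtain ⟨l, hl, hu⟩ := h1
  obtain ⟨l', hl', hv⟩ := h2
  choose! u hu hua hup using hu
  choose! v hv hvp hva using hv
  refine ⟨l, l + l', ∑ p ∈ F, |Real.log (f l (u p))| + ∑ p ∈ F, |Real.log (f l' (v p))|
    + 2 * C + 3 * D, ?_⟩
  intro N hN x hx hx0 hxN
  set y := vpGlue l (u (x 0)) (vpGlue N x (v (x N))) with hy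
  have hn : 0 < N + (l + l') := by omega
  have hg0 : vpGlue N x (v (x N)) 0 = x 0 := vpGlue_lt _ _ hN
  have hym : y ∈ shiftSpace T :=
    vpGlue_mem (hu _ hx0) (vpGlue_mem hx (hv _ hxN) (hvp _ hxN).symm) (by rw [hg0, hup _ hx0])
  have hy0 : y 0 = a := by rw [hy, vpGlue_lt _ _ hl, hua _ hx0]
  have hyend : y (N + (l + l')) = a := by
    rw [show N + (l + l') = l + (N + l') by ring, hy, vpGlue_add, vpGlue_add, hva _ hxN]
  have hyx : ∀ i < N, y (l + i) = x i := by
    intro i hi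
    rw [hy, vpGlue_add, vpGlue_lt _ _ hi]
  have hyv : ∀ i, y (l + N + i) = v (x N) i := by
    intro i
    rw [hy, add_assoc, vpGlue_add, vpGlue_add]
  set z := vpPer (N + (l + l')) y with hz
  have hzm : z ∈ shiftSpace T := vpPer_mem hn hym (by rw [hyend, hy0])
  have hzy : ∀ i < N + (l + l'), z i = y i := fun i hi => vpPer_lt y hi
  refine ⟨z, hzm, vpPer_iter _ _, ?_, ?_, ?_⟩
  · rw [hzy 0 hn, hy0]
  · intro i hi
    rw [hzy _ (by omega)]
    rcases hi.lt_or_eq with h | h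
    · exact hyx i h
    · subst h
      have := hyv 0
      rw [add_zero, hvp _ hxN] at this
      exact this
  · have e1 := H.lo l (N + l') hl (by omega) z hzm
    have e2 := H.lo N l' hN hl' _ (vp_shf_mem hzm l)
    rw [← Function.iterate_add_apply] at e2
    have b1 := H.bow l hl (u (x 0)) (hu _ hx0) z hzm (by
      intro i hi
      rw [hzy i (by omega), hy, vpGlue_lt _ _ hi])
    have b2 := H.bow N hN x hx _ (vp_shf_mem hzm l) (by
      intro i hi
      rw [vp_shf_iter, add_comm, hzy _ (by omega), hyx i hi])
    have b3 := H.bow l' hl' _ (hv _ hxN) _ (vp_shf_mem hzm (N + l)) (by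
      intro i hi
      rw [vp_shf_iter, show i + (N + l) = l + N + i by ring, hzy _ (by omega), hyv i])
    have s1 := Finset.single_le_sum (f := fun p => |Real.log (f l (u p))|)
      (fun p _ => abs_nonneg _) hx0
    have s2 := Finset.single_le_sum (f := fun p => |Real.log (f l' (v p))|)
      (fun p _ => abs_nonneg _) hxN
    have a1 := neg_abs_le (Real.log (f l (u (x 0))))
    have a2 := neg_abs_le (Real.log (f l' (v (x N))))
    rw [show N + (l + l') = l + (N + l') by ring]
    linarith


/-- Transition weights used to compare a partition with its approximation. -/
def vpW (R : Finset ℕ) (η : ℝ) (d : ℕ) (c : R) : ℝ := if (c : ℕ) = d then 1 - η else η / R.card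

lemma vpW_pos (R : Finset ℕ) (η : ℝ) (h0 : 0 < η) (h1 : η < 1) (d : ℕ) (c : R) :
    0 < vpW R η d c := by
  have : 0 < R.card := Finset.card_pos.2 ⟨c, c.2⟩
  unfold vpW
  split_ifs
  · linarith
  · positivity

lemma vpW_sum (R : Finset ℕ) (η : ℝ) (h0 : 0 < η) (h1 : η < 1) (d : ℕ) :
    ∑ c : R, vpW R η d c ≤ 1 := by
  have hle : ∀ c : R, vpW R η d c ≤ (if (c : ℕ) = d then 1 - η else 0) + η / R.card := by
    intro c
    have : 0 ≤ η / R.card := by positivity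
    unfold vpW
    split_ifs <;> linarith
  refine (Finset.sum_le_sum fun c _ => hle c).trans ?_
  rw [Finset.sum_add_distrib]
  have e1 : ∑ c : R, (if (c : ℕ) = d then 1 - η else 0) ≤ 1 - η := by
    rw [Finset.sum_coe_sort R (fun c => if c = d then 1 - η else 0), Finset.sum_ite_eq']
    split_ifs <;> linarith
  have e2 : ∑ c : R, η / (R.card : ℝ) ≤ η := by
    rw [Finset.sum_const, Finset.card_univ, Fintype.card_coe, nsmul_eq_mul]
    by_cases h : (R.card : ℝ) = 0
    · rw [h]; simp [h0.le]
    · rw [mul_div_cancel₀ _ h]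
  linarith

lemma vp_exists_q {S : Type*} {T : S → S → Prop} {f : ℕ → (ℕ → S) → ℝ} {D C E : ℝ}
    (H : VPHyp T f D C E) (a : S) (R : Finset ℕ) (hRne : 0 < R.card) (η : ℝ) (h0 : 0 < η)
    (h1 : η < 1)
    (γ : (ℕ → S) → ℕ) (B : ℝ) (p n l : ℕ) (hp : 0 < p)
    (hZ : ZFun T f p a ≤ ENNReal.ofReal (Real.exp (p * B))) :
    ∃ q : (Fin n → R) → ℝ, (∀ c, 0 < q c) ∧ ∑ c, q c ≤ 1 ∧
      (∀ c, -Real.log (q c) ≤ Real.log 2 + n * Real.log R.card) ∧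
      ∀ z ∈ shiftSpace T, shf^[p] z = z → z 0 = a → ∀ c,
        -Real.log (q c) ≤ Real.log 2 - Real.log (f p z) + p * B +
          ∑ i : Fin n, -Real.log (vpW R η (γ (shf^[l + i] z)) (c i)) := by
  classical
  let w : {x : ℕ → S // x ∈ shiftSpace T ∧ shf^[p] x = x ∧ x 0 = a} → (Fin n → R) → ℝ :=
    fun z c => ∏ i : Fin n, vpW R η (γ (shf^[l + (i : ℕ)] (z : ℕ → S))) (c i)
  have hw0 : ∀ z c, 0 < w z c := fun z c => Finset.prod_pos fun i _ => vpW_pos R η h0 h1 _ _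
  have hw1 : ∀ z, ∑ c, w z c ≤ 1 := by
    intro z
    have := Finset.prod_univ_sum (fun _ : Fin n => (Finset.univ : Finset R))
      (fun (i : Fin n) c => vpW R η (γ (shf^[l + (i : ℕ)] (z : ℕ → S))) c)
    rw [Fintype.piFinset_univ] at this
    change ∑ c, ∏ i, _ ≤ 1
    rw [← this]
    exact Finset.prod_le_one (fun i _ => Finset.sum_nonneg fun c _ => (vpW_pos R η h0 h1 _ _).le)
      fun i _ => vpW_sum R η h0 h1 _
  let Q : (Fin n → R) → ℝ≥0∞ := fun c =>
    ∑' z : {x : ℕ → S // x ∈ shiftSpace T ∧ shf^[p] x = x ∧ x 0 = a},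
      ENNReal.ofReal (f p z) * ENNReal.ofReal (Real.exp (-(p * B))) * ENNReal.ofReal (w z c)
  have hQ : ∑ c, Q c ≤ 1 := by
    calc ∑ c, Q c = ∑' c, Q c := (tsum_fintype _).symm
      _ = ∑' z : {x : ℕ → S // x ∈ shiftSpace T ∧ shf^[p] x = x ∧ x 0 = a}, ∑' c,
          ENNReal.ofReal (f p z) * ENNReal.ofReal (Real.exp (-(p * B))) *
            ENNReal.ofReal (w z c) := ENNReal.tsum_comm
      _ ≤ ∑' z : {x : ℕ → S // x ∈ shiftSpace T ∧ shf^[p] x = x ∧ x 0 = a},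
          ENNReal.ofReal (f p z) * ENNReal.ofReal (Real.exp (-(p * B))) := by
          refine ENNReal.tsum_le_tsum fun z => ?_
          rw [ENNReal.tsum_mul_left, tsum_fintype,
            ← ENNReal.ofReal_sum_of_nonneg fun c _ => (hw0 z c).le]
          calc _ ≤ _ * 1 := mul_le_mul_right (ENNReal.ofReal_le_one.2 (hw1 z)) _
            _ = _ := mul_one _
      _ = ZFun T f p a * ENNReal.ofReal (Real.exp (-(p * B))) := by
          rw [ENNReal.tsum_mul_right]; rfl
      _ ≤ ENNReal.ofReal (Real.exp (p * B)) * ENNReal.ofReal (Real.exp (-(p * B))) := by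
          gcongr
      _ = 1 := by
          rw [← ENNReal.ofReal_mul (Real.exp_pos _).le, ← Real.exp_add]; simp
  have hQtop : ∀ c, Q c ≠ ⊤ := fun c =>
    ((Finset.single_le_sum (fun _ _ => zero_le) (Finset.mem_univ c)).trans hQ).trans_lt
      ENNReal.one_lt_top |>.ne
  have hQr : ∑ c, (Q c).toReal ≤ 1 := by
    rw [← ENNReal.toReal_sum fun c _ => hQtop c]
    exact ENNReal.toReal_le_of_le_ofReal zero_le_one (by simpa using hQ)
  have hm : (0 : ℝ) < R.card := by exact_mod_cast hRne
  have hu : (0 : ℝ) < (1 / R.card) ^ n := by positivity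
  refine ⟨fun c => 1 / 2 * (Q c).toReal + 1 / 2 * (1 / R.card) ^ n, ?_, ?_, ?_, ?_⟩
  · intro c
    have : 0 ≤ (Q c).toReal := ENNReal.toReal_nonneg
    positivity
  · rw [Finset.sum_add_distrib, ← Finset.mul_sum, ← Finset.mul_sum]
    have : ∑ c : Fin n → R, (1 / (R.card : ℝ)) ^ n = 1 := by
      rw [Finset.sum_const, Finset.card_univ]
      simp [hm.ne']
    rw [this]
    linarith
  · intro c
    have h2 : (1 / 2 : ℝ) * (1 / R.card) ^ n ≤
        1 / 2 * (Q c).toReal + 1 / 2 * (1 / R.card) ^ n := by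
      have : 0 ≤ (Q c).toReal := ENNReal.toReal_nonneg
      linarith
    have h3 := Real.log_le_log (by positivity) h2
    rw [Real.log_mul (by norm_num) hu.ne', Real.log_pow, one_div, one_div, Real.log_inv,
      Real.log_inv] at h3
    rw [one_div, one_div]
    linarith
  · intro z hz hzp hza c
    have hf := H.pos p hp z hz
    have h2 : ENNReal.ofReal (f p z * Real.exp (-(p * B)) * w ⟨z, hz, hzp, hza⟩ c) ≤ Q c := by
      rw [ENNReal.ofReal_mul (by positivity), ENNReal.ofReal_mul hf.le]
      exact ENNReal.le_tsum (f := fun z : {x : ℕ → S // x ∈ shiftSpace T ∧ shf^[p] x = x ∧ x 0 = a}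
        => ENNReal.ofReal (f p z) * ENNReal.ofReal (Real.exp (-(p * B))) * ENNReal.ofReal (w z c))
        ⟨z, hz, hzp, hza⟩
    have h3 := (ENNReal.ofReal_le_iff_le_toReal (hQtop c)).1 h2
    have hwz := hw0 ⟨z, hz, hzp, hza⟩ c
    have h4 : (1 / 2 : ℝ) * (f p z * Real.exp (-(p * B)) * w ⟨z, hz, hzp, hza⟩ c) ≤
        1 / 2 * (Q c).toReal + 1 / 2 * (1 / R.card) ^ n := by
      linarith
    have h5 := Real.log_le_log (by positivity) h4
    rw [Real.log_mul (by norm_num) (by positivity), Real.log_mul (by positivity) hwz.ne',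
      Real.log_mul hf.ne' (Real.exp_pos _).ne', Real.log_exp,
      Real.log_prod (fun i _ => (vpW_pos R η h0 h1 _ _).ne'), one_div, Real.log_inv] at h5
    rw [Finset.sum_neg_distrib]
    rw [one_div]
    simp only [] at h5 ⊢
    linarith


lemma vp_exists_eta (m δ : ℝ) (hδ : 0 < δ) (hm : 0 < m) :
    ∃ η, 0 < η ∧ η < 1 ∧ -Real.log (1 - η) + η * Real.log (m / η) ≤ δ := by
  have hc : ContinuousAt (fun η : ℝ => -Real.log (1 - η) + (η * Real.log m + Real.negMulLog η)) 0 := by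
    refine ContinuousAt.add (ContinuousAt.neg (ContinuousAt.log (by fun_prop) (by norm_num))) ?_
    exact ContinuousAt.add (by fun_prop) Real.continuous_negMulLog.continuousAt
  have h1 : ∀ᶠ η in nhds (0 : ℝ),
      -Real.log (1 - η) + (η * Real.log m + Real.negMulLog η) < δ := by
    refine hc.eventually_lt continuousAt_const ?_
    simpa using hδ
  have h2 : ∀ᶠ η in nhds (0 : ℝ), η < 1 := eventually_lt_nhds one_pos
  have h3 : ∀ᶠ η in nhdsWithin (0 : ℝ) (Set.Ioi 0), 0 < η := self_mem_nhdsWithin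
  obtain ⟨η, ha, hb, hd⟩ := ((h1.filter_mono nhdsWithin_le_nhds).and
    ((h2.filter_mono nhdsWithin_le_nhds).and h3)).exists
  refine ⟨η, hd, hb, ?_⟩
  rw [Real.log_div hm.ne' hd.ne']
  unfold Real.negMulLog at ha
  linarith

lemma vp_upper_key {S : Type*} [Countable S] [MeasurableSpace S] [MeasurableSingletonClass S]
    {T : S → S → Prop} {f : ℕ → (ℕ → S) → ℝ} {D C E : ℝ}
    (H : VPHyp T f D C E) (a : S) (μ : Measure (ℕ → S)) [IsProbabilityMeasure μ]
    (hinv : ∀ s : Set (ℕ → S), MeasurableSet s → μ (shf ⁻¹' s) = μ s)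
    (hSS : ∀ᵐ x ∂μ, x ∈ shiftSpace T)
    (P : (ℕ → S) → ℕ) (hP : Measurable P) (R : Finset ℕ) (hR : ∀ x, P x ∈ R)
    (h : ℝ) (hh : ∀ n : ℕ, 0 < n → (n : ℝ) * h ≤ vpEnt μ (vpBlk P R hR n))
    (B : ℝ) (hB : ∀ᶠ p : ℕ in atTop, ZFun T f p a ≤ ENNReal.ofReal (Real.exp (p * B)))
    (δ : ℝ) (hδ : 0 < δ) :
    ∀ᶠ N : ℕ in atTop, Integrable (fun x => Real.log (f N x)) μ →
      N * h + ∫ x, Real.log (f N x) ∂μ ≤ N * (B + δ) := by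
  classical
  have hne : Nonempty (ℕ → S) := by
    obtain ⟨N, hN⟩ := H.mix a a
    obtain ⟨x, -⟩ := hN (N + 1) (Nat.lt_succ_self N)
    exact ⟨x⟩
  have hRne : 0 < R.card := Finset.card_pos.2 ⟨_, hR hne.some⟩
  have hm1 : (1 : ℝ) ≤ R.card := by exact_mod_cast hRne
  have hm : (0 : ℝ) < R.card := by exact_mod_cast hRne
  have hlm : 0 ≤ Real.log R.card := Real.log_nonneg hm1
  obtain ⟨η, h0, h1, hη⟩ := vp_exists_eta R.card (δ / 4) (by positivity) hm
  obtain ⟨γ, k, Dset, hDm, hDη, hDP, hγ⟩ := vp_approx μ P hP R hR η h0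
  set E' := E + Real.log R.card + |B| with hE'
  have hE0 := H.E0
  have hE'0 : 0 ≤ E' := by positivity
  set ε := δ / (8 * (E' + 1)) with hε
  have hεpos : 0 < ε := by positivity
  have hεE : 2 * ε * E' ≤ δ / 4 := by
    rw [hε]
    have : 2 * (δ / (8 * (E' + 1))) * E' = δ / 4 * (E' / (E' + 1)) := by field_simp; ring
    rw [this]
    have : E' / (E' + 1) ≤ 1 := by rw [div_le_one (by linarith)]; linarith
    nlinarith
  obtain ⟨F, hF⟩ := vp_tight μ ε hεpos
  obtain ⟨l, L, c, hglue⟩ := vp_glue H a F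
  set t0 := -Real.log (1 - η) with ht0
  have ht0' : 0 ≤ t0 := by
    have := Real.log_nonpos (show 0 ≤ 1 - η by linarith) (by linarith)
    linarith
  set t1 := Real.log (R.card / η) with ht1
  have ht1' : 0 ≤ t1 := Real.log_nonneg (by rw [le_div_iff₀ h0]; linarith)
  have hWle : ∀ (d : ℕ) (r : R), -Real.log (vpW R η d r) ≤ t0 + if (r : ℕ) = d then 0 else t1 := by
    intro d r
    unfold vpW
    split_ifs with hd
    · simp [ht0]
    · rw [ht1, ← Real.log_inv, inv_div]
      linarith
  set K := Real.log 2 + |c| + |L * B| + 2 * ε * (L * E') + |k * h| with hK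
  have hbig : ∀ᶠ N : ℕ in atTop, K ≤ N * (δ / 2) := by
    have : Tendsto (fun N : ℕ => (N : ℝ) * (δ / 2)) atTop atTop :=
      tendsto_natCast_atTop_atTop.atTop_mul_const (by positivity)
    exact this.eventually_ge_atTop K
  have hB' : ∀ᶠ N : ℕ in atTop, ZFun T f (N + L) a ≤
      ENNReal.ofReal (Real.exp ((N + L : ℕ) * B)) :=
    (tendsto_add_atTop_nat L).eventually hB
  filter_upwards [hbig, hB', eventually_gt_atTop k] with N hN1 hZ hNk hgint
  obtain ⟨n, rfl⟩ : ∃ n, N = n + k := ⟨N - k, by omega⟩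
  have hn : 0 < n := by omega
  obtain ⟨q, hq0, hq1, hqu, hqz⟩ := vp_exists_q H a R hRne η h0 h1 γ B (n + k + L) n l (by omega) hZ
  set Gc : Set (ℕ → S) := {x | x 0 ∉ F} ∪ (shf^[n + k]) ⁻¹' {x | x 0 ∉ F} with hGc
  have hF0m : MeasurableSet {x : ℕ → S | x 0 ∉ F} :=
    (measurable_pi_apply (X := fun _ : ℕ => S) 0)
      (MeasurableSet.of_discrete (s := {s : S | s ∉ F}))
  have hGm : MeasurableSet Gc := hF0m.union (vp_meas_iter _ hF0m)
  have hreal : ∀ (i : ℕ) (s : Set (ℕ → S)), MeasurableSet s →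
      μ.real (shf^[i] ⁻¹' s) = μ.real s := by
    intro i s hs
    rw [← map_measureReal_apply (vp_meas_iter i) hs, vp_inv_iter μ hinv i]
  have hGμ : μ.real Gc ≤ 2 * ε := by
    refine (measureReal_union_le _ _).trans ?_
    rw [hreal _ _ hF0m]
    linarith
  set p : ℝ := ((n + k + L : ℕ) : ℝ) with hp
  set Λ := Real.log 2 + |c| + p * B with hΛ
  -- pointwise bound
  have hpt : ∀ x ∈ shiftSpace T,
      Real.log (f (n + k) x) + -Real.log (q (vpBlk P R hR n x)) ≤
        Λ + (∑ i : Fin n, (t0 + (shf^[(i : ℕ)] ⁻¹' Dset).indicator (fun _ => t1) x)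
          + Gc.indicator (fun _ => p * E') x) := by
    intro x hx
    have hsum0 : 0 ≤ ∑ i : Fin n, (t0 + (shf^[(i : ℕ)] ⁻¹' Dset).indicator (fun _ => t1) x) :=
      Finset.sum_nonneg fun i _ => add_nonneg ht0' (Set.indicator_nonneg (fun _ _ => ht1') _)
    by_cases hxG : x ∈ Gc
    · rw [Set.indicator_of_mem hxG]
      have e1 := H.bd (n + k) (by omega) x hx
      have e2 := hqu (vpBlk P R hR n x)
      have e3 : ((n + k : ℕ) : ℝ) * E ≤ p * E := by
        apply mul_le_mul_of_nonneg_right _ hE0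
        rw [hp]; exact_mod_cast Nat.le_add_right _ _
      have e4 : (n : ℝ) * Real.log R.card ≤ p * Real.log R.card := by
        apply mul_le_mul_of_nonneg_right _ hlm
        rw [hp]; exact_mod_cast (by omega)
      have e5 : 0 ≤ p * B + p * |B| := by
        have hp0 : 0 ≤ p := by rw [hp]; positivity
        have := neg_abs_le B
        nlinarith
      have e6 : p * E' = p * E + p * Real.log R.card + p * |B| := by rw [hE']; ring
      have := abs_nonneg c
      linarith
    · rw [Set.indicator_of_notMem hxG, add_zero]
      have hx0 : x 0 ∈ F ∧ x (n + k) ∈ F := by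
        rw [hGc] at hxG
        simp only [Set.mem_union, Set.mem_preimage, Set.mem_setOf_eq, not_or, not_not,
          vp_shf_iter, zero_add] at hxG
        exact hxG
      obtain ⟨z, hz, hzp, hza, hzx, hfz⟩ := hglue (n + k) (by omega) x hx hx0.1 hx0.2
      have e1 := hqz z hz hzp hza (vpBlk P R hR n x)
      have e2 : ∑ i : Fin n, -Real.log (vpW R η (γ (shf^[l + i] z)) (vpBlk P R hR n x i)) ≤
          ∑ i : Fin n, (t0 + (shf^[(i : ℕ)] ⁻¹' Dset).indicator (fun _ => t1) x) := by
        refine Finset.sum_le_sum fun i _ => (hWle _ _).trans ?_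
        have hg : γ (shf^[l + i] z) = γ (shf^[(i : ℕ)] x) := by
          apply hγ
          intro j hj
          rw [vp_shf_iter, vp_shf_iter, ← hzx (j + i) (by omega)]
          congr 1
          omega
        rw [hg]
        by_cases hxD : shf^[(i : ℕ)] x ∈ Dset
        · rw [Set.indicator_of_mem (by exact hxD)]
          split_ifs <;> linarith
        · rw [Set.indicator_of_notMem (by exact hxD), 
            if_pos (show (vpBlk P R hR n x i : ℕ) = _ from (hDP _ hxD).symm)]
      have := le_abs_self c
      linarith
  -- integrate
  have hqint := (vp_integral_comp μ _ (vpBlk_meas P hP R hR n) (fun c => -Real.log (q c))).1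
  have hent := vpEnt_le μ _ (vpBlk_meas P hP R hR n) q hq1 (fun c => (hq0 c).le)
    (fun c _ => hq0 c)
  have hDi : ∀ i : Fin n, Integrable
      (fun x => t0 + (shf^[(i : ℕ)] ⁻¹' Dset).indicator (fun _ => t1) x) μ := fun i =>
    (integrable_const _).add ((integrable_const _).indicator (vp_meas_iter _ hDm))
  have hSi : Integrable (fun x => ∑ i : Fin n,
      (t0 + (shf^[(i : ℕ)] ⁻¹' Dset).indicator (fun _ => t1) x)) μ :=
    integrable_finsetSum _ fun i _ => hDi i
  have hGi : Integrable (fun x => Gc.indicator (fun _ => p * E') x) μ :=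
    (integrable_const _).indicator hGm
  have hI := integral_mono_ae (hgint.add hqint) ((integrable_const Λ).add (hSi.add hGi))
    (hSS.mono fun x hx => hpt x hx)
  simp only [Pi.add_apply] at hI
  have hSGi : Integrable (fun x => ∑ i : Fin n,
      (t0 + (shf^[(i : ℕ)] ⁻¹' Dset).indicator (fun _ => t1) x) +
        Gc.indicator (fun _ => p * E') x) μ := hSi.add hGi
  rw [integral_add hgint hqint, integral_add (integrable_const Λ) hSGi,
    integral_add hSi hGi, integral_finsetSum _ (fun i _ => hDi i),
    integral_indicator_const _ hGm] at hI
  have hIi : ∀ i : Fin n, ∫ x, (t0 + (shf^[(i : ℕ)] ⁻¹' Dset).indicator (fun _ => t1) x) ∂μ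
      ≤ δ / 4 := by
    intro i
    rw [integral_add (integrable_const _) ((integrable_const _).indicator (vp_meas_iter _ hDm)),
      integral_indicator_const _ (vp_meas_iter _ hDm), hreal _ _ hDm]
    simp only [integral_const, probReal_univ, smul_eq_mul, one_mul]
    have := mul_le_mul_of_nonneg_right hDη ht1'
    linarith
  have hIs := Finset.sum_le_sum fun i (_ : i ∈ Finset.univ) => hIi i
  simp only [integral_const, probReal_univ, smul_eq_mul, one_mul, Finset.sum_const,
    Finset.card_univ, Fintype.card_fin, nsmul_eq_mul] at hI hIs
  have hp0 : 0 ≤ p := by rw [hp]; positivity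
  have hG2 : μ.real Gc * (p * E') ≤ 2 * ε * (p * E') :=
    mul_le_mul_of_nonneg_right hGμ (by positivity)
  have hpN : p = ((n + k : ℕ) : ℝ) + L := by rw [hp]; push_cast; ring
  have hG3 : 2 * ε * (p * E') ≤ ((n + k : ℕ) : ℝ) * (δ / 4) + 2 * ε * (L * E') := by
    rw [hpN]
    have : (0 : ℝ) ≤ ((n + k : ℕ) : ℝ) := by positivity
    nlinarith [mul_le_mul_of_nonneg_left hεE this]
  have hn4 : (n : ℝ) * (δ / 4) ≤ ((n + k : ℕ) : ℝ) * (δ / 4) := by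
    apply mul_le_mul_of_nonneg_right _ (by positivity)
    exact_mod_cast Nat.le_add_right _ _
  have hnh := hh n hn
  have hkh : ((n + k : ℕ) : ℝ) * h ≤ n * h + |k * h| := by
    push_cast
    have := le_abs_self (k * h)
    linarith
  have hLB := le_abs_self (L * B)
  have hpB : p * B = ((n + k : ℕ) : ℝ) * B + L * B := by rw [hpN]; ring
  have hfin : ((n + k : ℕ) : ℝ) * (B + δ) = ((n + k : ℕ) : ℝ) * B +
      (((n + k : ℕ) : ℝ) * (δ / 4) + ((n + k : ℕ) : ℝ) * (δ / 4) +
        ((n + k : ℕ) : ℝ) * (δ / 2)) := by ring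
  linarith


lemma vp_L_int {S : Type*} [MeasurableSpace S] (μ : Measure (ℕ → S)) (g : (ℕ → S) → ℝ)
    (hi : Integrable g μ) :
    ((↑(∫⁻ x, ENNReal.ofReal (g x) ∂μ) : EReal) - (↑(∫⁻ x, ENNReal.ofReal (-g x) ∂μ) : EReal))
      = ((∫ x, g x ∂μ : ℝ) : EReal) := by
  have h1 : ∫⁻ x, ENNReal.ofReal (g x) ∂μ ≠ ⊤ := by
    have := hi.lintegral_lt_top
    exact this.ne
  have h2 : ∫⁻ x, ENNReal.ofReal (-g x) ∂μ ≠ ⊤ := by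
    have := hi.neg.lintegral_lt_top
    exact this.ne
  rw [integral_eq_lintegral_pos_part_sub_lintegral_neg_part hi, EReal.coe_sub,
    EReal.coe_ennreal_toReal h1, EReal.coe_ennreal_toReal h2]

lemma vp_L_dich {S : Type*} [MeasurableSpace S] (μ : Measure (ℕ → S)) [IsProbabilityMeasure μ]
    (g : (ℕ → S) → ℝ) (hg : Measurable g) (K : ℝ) (hK : ∀ᵐ x ∂μ, g x ≤ K) :
    ((↑(∫⁻ x, ENNReal.ofReal (g x) ∂μ) : EReal) - (↑(∫⁻ x, ENNReal.ofReal (-g x) ∂μ) : EReal))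
      = ⊥ ∨ Integrable g μ := by
  by_cases h : ∫⁻ x, ENNReal.ofReal (-g x) ∂μ = ⊤
  · left
    rw [h]; simp
  · right
    have h1 : ∫⁻ x, ENNReal.ofReal (g x) ∂μ < ⊤ := by
      calc ∫⁻ x, ENNReal.ofReal (g x) ∂μ ≤ ∫⁻ x, ENNReal.ofReal K ∂μ :=
            lintegral_mono_ae (hK.mono fun x hx => ENNReal.ofReal_le_ofReal hx)
        _ < ⊤ := by simp
    refine ⟨hg.aestronglyMeasurable, ?_⟩
    rw [hasFiniteIntegral_iff_norm]
    calc ∫⁻ x, ENNReal.ofReal ‖g x‖ ∂μ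
        ≤ ∫⁻ x, (ENNReal.ofReal (g x) + ENNReal.ofReal (-g x)) ∂μ := by
          refine lintegral_mono fun x => ?_
          rcases le_total 0 (g x) with h0 | h0
          · rw [Real.norm_of_nonneg h0]; exact le_self_add
          · rw [Real.norm_of_nonpos h0]; exact le_add_self
      _ = ∫⁻ x, ENNReal.ofReal (g x) ∂μ + ∫⁻ x, ENNReal.ofReal (-g x) ∂μ :=
          lintegral_add_left (ENNReal.measurable_ofReal.comp hg) _
      _ < ⊤ := ENNReal.add_lt_top.2 ⟨h1, lt_top_iff_ne_top.2 h⟩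

lemma vp_div_le {x : EReal} {N : ℕ} (hN : 0 < N) {r : ℝ} :
    x / ((N : ℝ) : EReal) ≤ (r : EReal) ↔ x ≤ ((N * r : ℝ) : EReal) := by
  rw [EReal.div_le_iff_le_mul (by exact_mod_cast hN) (EReal.coe_ne_top _), EReal.coe_mul]

lemma vp_press_lt {S : Type*} {T : S → S → Prop} {f : ℕ → (ℕ → S) → ℝ} {a : S} {B : ℝ}
    (hB : press T f a < (B : EReal)) :
    ∀ᶠ p : ℕ in atTop, ZFun T f p a ≤ ENNReal.ofReal (Real.exp (p * B)) := by
  have h := eventually_lt_of_limsup_lt hB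
  filter_upwards [h, eventually_gt_atTop 0] with p hp hp0
  have h2 := (vp_div_le hp0).1 hp.le
  rw [← ENNReal.log_le_log_iff, ENNReal.log_ofReal_of_pos (Real.exp_pos _), Real.log_exp]
  exact h2

lemma vp_upper {S : Type*} [Countable S] [MeasurableSpace S] [MeasurableSingletonClass S]
    {T : S → S → Prop} {f : ℕ → (ℕ → S) → ℝ} {D C E : ℝ}
    (H : VPHyp T f D C E) (hmeas : ∀ n, Measurable (f n))
    (a : S) (μ : Measure (ℕ → S)) [IsProbabilityMeasure μ]
    (hinv : ∀ s : Set (ℕ → S), MeasurableSet s → μ (shf ⁻¹' s) = μ s)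
    (hSS : ∀ᵐ x ∂μ, x ∈ shiftSpace T) (hly : lyap μ f ≠ ⊥) :
    (hKS μ : EReal) + lyap μ f ≤ press T f a := by
  refine EReal.le_of_forall_lt_iff_le.1 fun B hB => ?_
  have hZ := vp_press_lt hB
  have key : ∀ P : {P : (ℕ → S) → ℕ // Measurable P ∧ (Set.range P).Finite},
      ∃ h : ℝ, 0 ≤ h ∧ (⨅ n : ℕ, blockEnt μ (P : (ℕ → S) → ℕ) (n + 1) / ((n : ℝ≥0∞) + 1)) =
        ENNReal.ofReal h ∧ lyap μ f ≤ ((B - h : ℝ) : EReal) := by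
    rintro ⟨P, hP, hfin⟩
    set R := hfin.toFinset with hRdef
    have hR : ∀ x, P x ∈ R := fun x => by simp [hRdef]
    set I := ⨅ n : ℕ, blockEnt μ P (n + 1) / ((n : ℝ≥0∞) + 1) with hI
    have hIle : ∀ n : ℕ, 0 < n → I ≤ ENNReal.ofReal (vpEnt μ (vpBlk P R hR n) / n) := by
      intro n hn
      obtain ⟨m, rfl⟩ : ∃ m, n = m + 1 := ⟨n - 1, by omega⟩
      refine (iInf_le _ m).trans (le_of_eq ?_)
      rw [vp_blockEnt μ P R hR, ENNReal.ofReal_div_of_pos (by positivity), ENNReal.ofReal_natCast]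
      push_cast
      rfl
    have hItop : I ≠ ⊤ := ((hIle 1 one_pos).trans_lt ENNReal.ofReal_lt_top).ne
    refine ⟨I.toReal, ENNReal.toReal_nonneg, (ENNReal.ofReal_toReal hItop).symm, ?_⟩
    have hh : ∀ n : ℕ, 0 < n → (n : ℝ) * I.toReal ≤ vpEnt μ (vpBlk P R hR n) := by
      intro n hn
      have hn' : (0 : ℝ) < n := by exact_mod_cast hn
      have := ENNReal.toReal_le_of_le_ofReal (div_nonneg (vpEnt_nonneg μ _) hn'.le) (hIle n hn)
      rw [le_div_iff₀ hn'] at this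
      linarith
    refine EReal.le_of_forall_lt_iff_le.1 fun r hr => ?_
    have hr' : B - I.toReal < r := by exact_mod_cast hr
    have hev := vp_upper_key H a μ hinv hSS P hP R hR I.toReal hh B hZ (r - (B - I.toReal))
      (by linarith)
    refine limsup_le_of_le (by isBoundedDefault) ?_
    filter_upwards [hev, eventually_gt_atTop 0] with N hN hN0
    rw [vp_div_le hN0]
    rcases vp_L_dich μ (fun x => Real.log (f N x)) (Real.measurable_log.comp (hmeas N)) (N * E)
      (hSS.mono fun x hx => H.bd N hN0 x hx) with h1 | h1
    · rw [h1]; exact bot_le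
    · rw [vp_L_int μ _ h1, EReal.coe_le_coe_iff]
      have := hN h1
      nlinarith
  obtain ⟨h0, h0n, -, h0l⟩ := key ⟨fun _ => 0, measurable_const, by
    exact (Set.finite_singleton 0).subset (by rintro _ ⟨x, rfl⟩; rfl)⟩
  have hlt : lyap μ f ≠ ⊤ := (h0l.trans_lt (EReal.coe_lt_top _)).ne
  lift lyap μ f to ℝ using ⟨hlt, hly⟩ with lam hlam
  have hnn : 0 ≤ B - lam := by
    have : lam ≤ B - h0 := by exact_mod_cast h0l
    linarith
  have hK : hKS μ ≤ ENNReal.ofReal (B - lam) := by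
    refine iSup_le fun P => ?_
    obtain ⟨h, hn, he, hl⟩ := key P
    rw [he]
    apply ENNReal.ofReal_le_ofReal
    have : lam ≤ B - h := by exact_mod_cast hl
    linarith
  calc (hKS μ : EReal) + lam ≤ ((ENNReal.ofReal (B - lam) : ℝ≥0∞) : EReal) + lam := by
        gcongr
        exact_mod_cast hK
    _ = (B : EReal) := by
        rw [EReal.coe_ennreal_ofReal, max_eq_left hnn, ← EReal.coe_add]
        congr 1
        ring


lemma vp_iid_cyl {K : Type*} [Fintype K] [MeasurableSpace K] [MeasurableSingletonClass K]
    (p : Measure K) [IsProbabilityMeasure p] (J : Finset ℕ) (c : ℕ → K) :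
    (Measure.infinitePi (fun _ : ℕ => p)).real {ω | ∀ j ∈ J, ω j = c j} =
      ∏ j ∈ J, p.real {c j} := by
  have h := Measure.infinitePi_pi (fun _ : ℕ => p) (s := J) (t := fun j => {c j})
    (fun j _ => MeasurableSet.singleton _)
  have h2 : {ω : ℕ → K | ∀ j ∈ J, ω j = c j} = Set.pi (J : Set ℕ) (fun j => {c j}) := by
    ext ω; simp [Set.mem_pi]
  rw [h2, measureReal_def, h, ENNReal.toReal_prod]
  rfl

lemma vp_iid_one {K : Type*} [Fintype K] [MeasurableSpace K] [MeasurableSingletonClass K]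
    (p : Measure K) [IsProbabilityMeasure p] (j : ℕ) (c : K) :
    (Measure.infinitePi (fun _ : ℕ => p)).real ((fun ω : ℕ → K => ω j) ⁻¹' {c}) = p.real {c} := by
  have := vp_iid_cyl p {j} (fun _ => c)
  simp at this
  exact this

lemma vp_iid_int {K : Type*} [Fintype K] [MeasurableSpace K] [MeasurableSingletonClass K]
    (p : Measure K) [IsProbabilityMeasure p] (J : Finset ℕ) (φ : K → ℝ) :
    Integrable (fun ω : ℕ → K => ∑ j ∈ J, φ (ω j)) (Measure.infinitePi (fun _ : ℕ => p)) ∧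
    ∫ ω, ∑ j ∈ J, φ (ω j) ∂(Measure.infinitePi (fun _ : ℕ => p)) =
      J.card * ∑ c, p.real {c} * φ c := by
  have h := fun j : ℕ => vp_integral_comp (Measure.infinitePi (fun _ : ℕ => p))
    (fun ω : ℕ → K => ω j) (fun c => measurable_pi_apply j (MeasurableSet.singleton c)) φ
  refine ⟨integrable_finsetSum _ fun j _ => (h j).1, ?_⟩
  rw [integral_finsetSum _ fun j _ => (h j).1]
  rw [Finset.sum_congr rfl fun j _ => (h j).2]
  simp only [vp_iid_one]
  rw [Finset.sum_const, nsmul_eq_mul]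

lemma vp_iid_shift {K : Type*} [Fintype K] [MeasurableSpace K] [MeasurableSingletonClass K]
    (p : Measure K) [IsProbabilityMeasure p] :
    (Measure.infinitePi (fun _ : ℕ => p)).map shf = Measure.infinitePi (fun _ : ℕ => p) := by
  refine Measure.eq_infinitePi _ fun s t ht => ?_
  rw [Measure.map_apply vp_meas_shf (MeasurableSet.pi s.countable_toSet fun i hi => ht i)]
  have h2 : (shf ⁻¹' (Set.pi (s : Set ℕ) t) : Set (ℕ → K)) =
      Set.pi ((s.map (addRightEmbedding 1) : Finset ℕ) : Set ℕ) (fun j => t (j - 1)) := by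
    ext ω; simp [Set.mem_pi, shf]
  rw [h2, Measure.infinitePi_pi _ (fun j _ => ht _)]
  simp

lemma vp_iid_ent {K ι : Type*} [Fintype K] [MeasurableSpace K] [MeasurableSingletonClass K]
    [Fintype ι]
    (p : Measure K) [IsProbabilityMeasure p] (G : (ℕ → K) → ι)
    (hG : ∀ c, MeasurableSet (G ⁻¹' {c})) (J : Finset ℕ)
    (hinj : ∀ ω ω', G ω = G ω' → ∀ j ∈ J, ω j = ω' j) (hp : ∀ c, 0 < p.real {c}) :
    J.card * ∑ c, Real.negMulLog (p.real {c}) ≤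
      vpEnt (Measure.infinitePi (fun _ : ℕ => p)) G := by
  set m := Measure.infinitePi (fun _ : ℕ => p) with hm
  rw [vpEnt_eq m G hG]
  have h := vp_iid_int p J (fun c => -Real.log (p.real {c}))
  have h3 : J.card * ∑ c, Real.negMulLog (p.real {c}) =
      J.card * ∑ c, p.real {c} * (-Real.log (p.real {c})) := by
    congr 1
    exact Finset.sum_congr rfl fun c _ => by unfold Real.negMulLog; ring
  rw [h3, ← h.2]
  refine integral_mono_ae h.1 (vp_integral_comp m G hG
    (fun c => -Real.log (m.real (G ⁻¹' {c})))).1 ?_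
  have hae : ∀ᵐ ω ∂m, ∀ c, G ω = c → m.real (G ⁻¹' {c}) ≠ 0 := by
    rw [ae_all_iff]
    intro c
    by_cases hc : m.real (G ⁻¹' {c}) = 0
    · have : m (G ⁻¹' {c}) = 0 := by
        rwa [measureReal_eq_zero_iff] at hc
      have h5 := measure_eq_zero_iff_ae_notMem.1 this
      filter_upwards [h5] with ω hω h6
      exact absurd h6 hω
    · exact Eventually.of_forall fun ω _ => hc
  filter_upwards [hae] with ω hω
  have hpos : 0 < m.real (G ⁻¹' {G ω}) :=
    lt_of_le_of_ne measureReal_nonneg (Ne.symm (hω _ rfl))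
  have hle : m.real (G ⁻¹' {G ω}) ≤ ∏ j ∈ J, p.real {ω j} := by
    rw [← vp_iid_cyl]
    exact measureReal_mono fun ω' h' j hj => hinj ω' ω h' j hj
  have := Real.log_le_log hpos hle
  rw [Real.log_prod (fun j _ => (hp _).ne')] at this
  simp only [Finset.sum_neg_distrib]
  linarith

lemma vpEnt_avg {Ω ι : Type*} [MeasurableSpace Ω] [Fintype ι] (n : ℕ) (hn : 0 < n)
    (ν : ℕ → Measure Ω) (hν : ∀ i, IsProbabilityMeasure (ν i)) (g : Ω → ι) (h : ℝ)
    (hh : ∀ i < n, h ≤ vpEnt (ν i) g) :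
    h ≤ vpEnt ((n : ℝ≥0∞)⁻¹ • ∑ i ∈ Finset.range n, ν i) g := by
  have hn' : (0 : ℝ) < n := by exact_mod_cast hn
  have hr : ∀ s : Set Ω, ((n : ℝ≥0∞)⁻¹ • ∑ i ∈ Finset.range n, ν i).real s =
      ∑ i ∈ Finset.range n, (n : ℝ)⁻¹ • (ν i).real s := by
    intro s
    simp only [measureReal_def, Measure.smul_apply, Measure.finsetSum_apply, smul_eq_mul,
      ENNReal.toReal_mul, ENNReal.toReal_inv, ENNReal.toReal_natCast]
    rw [ENNReal.toReal_sum (fun i _ => measure_ne_top _ _), Finset.mul_sum]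
  have h1 : ∀ c, ∑ i ∈ Finset.range n, (n : ℝ)⁻¹ • Real.negMulLog ((ν i).real (g ⁻¹' {c})) ≤
      Real.negMulLog (((n : ℝ≥0∞)⁻¹ • ∑ i ∈ Finset.range n, ν i).real (g ⁻¹' {c})) := by
    intro c
    rw [hr]
    refine Real.concaveOn_negMulLog.le_map_sum (fun _ _ => by positivity) ?_
      (fun i _ => measureReal_nonneg)
    simp [hn'.ne']
  calc h = ∑ i ∈ Finset.range n, (n : ℝ)⁻¹ * h := by
        simp; field_simp
    _ ≤ ∑ i ∈ Finset.range n, (n : ℝ)⁻¹ * vpEnt (ν i) g := by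
        refine Finset.sum_le_sum fun i hi => ?_
        have := hh i (Finset.mem_range.1 hi)
        gcongr
    _ = ∑ c, ∑ i ∈ Finset.range n, (n : ℝ)⁻¹ • Real.negMulLog ((ν i).real (g ⁻¹' {c})) := by
        rw [Finset.sum_comm]
        simp [vpEnt, Finset.mul_sum]
    _ ≤ _ := Finset.sum_le_sum fun c _ => h1 c


def vpPhi {S K : Type*} (n : ℕ) (w : K → ℕ → S) (ω : ℕ → K) : ℕ → S :=
  fun j => w (ω (j / n)) (j % n)

lemma vpPhi_mem {S K : Type*} {T : S → S → Prop} {n : ℕ} (hn : 0 < n) {w : K → ℕ → S} {a : S}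
    (hw : ∀ k, w k ∈ shiftSpace T) (hw0 : ∀ k, w k 0 = a) (hwn : ∀ k, w k n = a) (ω : ℕ → K) :
    vpPhi n w ω ∈ shiftSpace T := by
  intro j
  unfold vpPhi
  have hlt := Nat.mod_lt j hn
  have hdm := Nat.div_add_mod j n
  by_cases h : j % n + 1 = n
  · have h1 : j + 1 = n * (j / n + 1) := by rw [mul_add]; omega
    have h2 : (j + 1) / n = j / n + 1 := by
      conv_lhs => rw [h1]
      rw [Nat.mul_div_cancel_left _ hn]
    have h3 : (j + 1) % n = 0 := by rw [h1]; simp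
    rw [h3, hw0]
    have := hw (ω (j / n)) (j % n)
    rwa [h, hwn] at this
  · have h1 : j + 1 = n * (j / n) + (j % n + 1) := by omega
    have h2 : (j + 1) / n = j / n := by
      conv_lhs => rw [h1]
      rw [Nat.mul_add_div hn, Nat.div_eq_of_lt (show j % n + 1 < n by omega)]; rfl
    have h3 : (j + 1) % n = j % n + 1 := by
      conv_lhs => rw [h1]
      rw [Nat.mul_add_mod, Nat.mod_eq_of_lt (by omega)]
    rw [h2, h3]
    exact hw _ _

lemma vpPhi_blk {S K : Type*} {n : ℕ} (w : K → ℕ → S) (ω : ℕ → K) {k i : ℕ}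
    (hi : i < n) : vpPhi n w ω (k * n + i) = w (ω k) i := by
  have hn : 0 < n := by omega
  unfold vpPhi
  rw [mul_comm, Nat.mul_add_div hn, Nat.mul_add_mod, Nat.div_eq_of_lt hi, Nat.mod_eq_of_lt hi]
  rfl

lemma vpPhi_iter {S K : Type*} {n : ℕ} (hn : 0 < n) (w : K → ℕ → S) (ω : ℕ → K) (k : ℕ) :
    shf^[k * n] (vpPhi n w ω) = vpPhi n w (shf^[k] ω) := by
  funext j
  rw [vp_shf_iter]
  unfold vpPhi
  rw [vp_shf_iter, Nat.add_mul_div_right _ _ hn, Nat.add_mul_mod_self_right]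

lemma vpPhi_meas {S K : Type*} [MeasurableSpace S] [Finite K] [MeasurableSpace K]
    [MeasurableSingletonClass K] (n : ℕ) (w : K → ℕ → S) : Measurable (vpPhi n w) := by
  refine measurable_pi_lambda _ fun j => ?_
  have h : Measurable (fun k : K => w k (j % n)) := Measurable.of_discrete
  exact h.comp (measurable_pi_apply (j / n))

def vpNu {S K : Type*} [MeasurableSpace S] [MeasurableSpace K] (p : Measure K)
    [IsProbabilityMeasure p] (n : ℕ) (w : K → ℕ → S) (i : ℕ) : Measure (ℕ → S) :=
  (Measure.infinitePi (fun _ : ℕ => p)).map (fun ω => shf^[i] (vpPhi n w ω))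

def vpMu {S K : Type*} [MeasurableSpace S] [MeasurableSpace K] (p : Measure K)
    [IsProbabilityMeasure p] (n : ℕ) (w : K → ℕ → S) : Measure (ℕ → S) :=
  (n : ℝ≥0∞)⁻¹ • ∑ i ∈ Finset.range n, vpNu p n w i

section
variable {S K : Type*} [MeasurableSpace S] [Fintype K] [MeasurableSpace K]
    [MeasurableSingletonClass K] (p : Measure K) [IsProbabilityMeasure p]

lemma vpNu_meas (n : ℕ) (w : K → ℕ → S) (i : ℕ) :
    Measurable (fun ω => shf^[i] (vpPhi n w ω)) := (vp_meas_iter i).comp (vpPhi_meas n w)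

lemma vpNu_prob (n : ℕ) (w : K → ℕ → S) (i : ℕ) : IsProbabilityMeasure (vpNu p n w i) :=
  Measure.isProbabilityMeasure_map (vpNu_meas n w i).aemeasurable

lemma vpNu_ae (n : ℕ) (w : K → ℕ → S) (i : ℕ) {Q : (ℕ → S) → Prop} (hQ : MeasurableSet {x | Q x})
    (h : ∀ ω, Q (shf^[i] (vpPhi n w ω))) : ∀ᵐ x ∂(vpNu p n w i), Q x := by
  unfold vpNu
  rw [ae_map_iff (vpNu_meas n w i).aemeasurable hQ]
  exact Eventually.of_forall h

lemma vpMu_prob {n : ℕ} (hn : 0 < n) (w : K → ℕ → S) : IsProbabilityMeasure (vpMu p n w) := by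
  constructor
  have := vpNu_prob p n w
  simp only [vpMu, Measure.smul_apply, Measure.finsetSum_apply, measure_univ, smul_eq_mul]
  simp
  exact ENNReal.inv_mul_cancel (by exact_mod_cast hn.ne') (by simp)

lemma vpMu_inv {n : ℕ} (hn : 0 < n) (w : K → ℕ → S) (s : Set (ℕ → S)) (hs : MeasurableSet s) :
    vpMu p n w (shf ⁻¹' s) = vpMu p n w s := by
  have h1 : ∀ i, vpNu p n w i (shf ⁻¹' s) = vpNu p n w (i + 1) s := by
    intro i
    unfold vpNu
    rw [Measure.map_apply (vpNu_meas n w i) (vp_meas_shf hs),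
      Measure.map_apply (vpNu_meas n w (i + 1)) hs]
    congr 1
    ext ω
    simp only [Set.mem_preimage, Function.iterate_succ_apply']
  have h2 : vpNu p n w n = vpNu p n w 0 := by
    unfold vpNu
    have h := vp_iid_shift p
    conv_rhs => rw [← h]
    rw [Measure.map_map (vpNu_meas n w 0) vp_meas_shf]
    congr 1
    funext ω
    have := vpPhi_iter hn w ω 1
    simpa using this
  simp only [vpMu, Measure.smul_apply, Measure.finsetSum_apply, h1]
  congr 1
  obtain ⟨k, rfl⟩ : ∃ k, n = k + 1 := ⟨n - 1, by omega⟩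
  rw [Finset.sum_range_succ, h2, Finset.sum_range_succ']

set_option linter.unusedSectionVars false in
lemma vpMu_ae (n : ℕ) (w : K → ℕ → S) {Q : (ℕ → S) → Prop}
    (h : ∀ i < n, ∀ᵐ x ∂(vpNu p n w i), Q x) : ∀ᵐ x ∂(vpMu p n w), Q x := by
  rw [ae_iff]
  simp only [vpMu, Measure.smul_apply, Measure.finsetSum_apply, smul_eq_mul]
  rw [Finset.sum_eq_zero, mul_zero]
  intro i hi
  exact ae_iff.1 (h i (Finset.mem_range.1 hi))

end


lemma vpMu_ent {S K : Type*} [Countable S] [MeasurableSpace S] [MeasurableSingletonClass S]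
    [Fintype K] [MeasurableSpace K] [MeasurableSingletonClass K] (p : Measure K)
    [IsProbabilityMeasure p] (hp : ∀ c, 0 < p.real {c}) {n : ℕ} (hn : 0 < n) (w : K → ℕ → S)
    (hinj : ∀ k k', (∀ i < n, w k i = w k' i) → k = k')
    (e : S → ℕ) (he : ∀ k k' i i', i < n → i' < n → e (w k i) = e (w k' i') → w k i = w k' i')
    (R : Finset ℕ) (hR : ∀ x : ℕ → S, e (x 0) ∈ R) (k : ℕ) :
    ((k - 1 : ℕ) : ℝ) * ∑ c, Real.negMulLog (p.real {c}) ≤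
      vpEnt (vpMu p n w) (vpBlk (fun x : ℕ → S => e (x 0)) R hR (k * n)) := by
  have hP : Measurable (fun x : ℕ → S => e (x 0)) :=
    (Measurable.of_discrete (f := e)).comp (measurable_pi_apply 0)
  have hmeas := vpBlk_meas _ hP R hR (k * n)
  refine vpEnt_avg n hn _ (vpNu_prob p n w) _ _ fun i hi => ?_
  unfold vpNu
  rw [vpEnt_comp _ _ (vpNu_meas n w i) _ hmeas]
  have := vp_iid_ent p (fun ω => vpBlk (fun x : ℕ → S => e (x 0)) R hR (k * n)
    (shf^[i] (vpPhi n w ω))) (fun c => (vpNu_meas n w i) (hmeas c)) (Finset.Ico 1 k) ?_ hp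
  · simpa using this
  intro ω ω' h j hj
  rw [Finset.mem_Ico] at hj
  refine hinj _ _ fun t ht => ?_
  have h1 : n ≤ j * n := Nat.le_mul_of_pos_left n hj.1
  have h2 : (j + 1) * n ≤ k * n := Nat.mul_le_mul_right n hj.2
  rw [add_mul] at h2
  have h3 := congrArg Subtype.val (congrFun h ⟨j * n + t - i, by omega⟩)
  simp only [vpBlk, vp_shf_iter] at h3
  have h4 : 0 + (j * n + t - i) + i = j * n + t := by omega
  rw [h4, vpPhi_blk _ _ ht, vpPhi_blk _ _ ht] at h3
  exact he _ _ _ _ ht ht h3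

lemma vpMu_hKS {S K : Type*} [Countable S] [MeasurableSpace S] [MeasurableSingletonClass S]
    [Fintype K] [MeasurableSpace K] [MeasurableSingletonClass K] (p : Measure K)
    [IsProbabilityMeasure p] (hp : ∀ c, 0 < p.real {c}) {n : ℕ} (hn : 0 < n) (w : K → ℕ → S)
    (hinj : ∀ k k', (∀ i < n, w k i = w k' i) → k = k') :
    ENNReal.ofReal ((∑ c, Real.negMulLog (p.real {c})) / n) ≤ hKS (vpMu p n w) := by
  classical
  have hprob := vpMu_prob p hn w
  have hinv := vpMu_inv p hn w
  obtain ⟨e0, he0⟩ := Countable.exists_injective_nat S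
  set V : Finset S := (Finset.univ ×ˢ Finset.range n).image (fun q : K × ℕ => w q.1 q.2) with hV
  have hVm : ∀ k, ∀ i < n, w k i ∈ V := by
    intro k i hi
    rw [hV, Finset.mem_image]
    exact ⟨(k, i), by simp [hi], rfl⟩
  set e : S → ℕ := fun s => if s ∈ V then e0 s + 1 else 0 with hedef
  set R : Finset ℕ := insert 0 (V.image (fun s => e0 s + 1)) with hRdef
  have hR : ∀ x : ℕ → S, e (x 0) ∈ R := by
    intro x
    by_cases h : x 0 ∈ V
    · simp only [hedef, h, if_true, hRdef]
      exact Finset.mem_insert_of_mem (Finset.mem_image_of_mem _ h)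
    · simp [hedef, h, hRdef]
  have he : ∀ k k' i i', i < n → i' < n → e (w k i) = e (w k' i') → w k i = w k' i' := by
    intro k k' i i' hi hi' h
    simp only [hedef, hVm k i hi, hVm k' i' hi', if_true] at h
    exact he0 (by omega)
  have hP : Measurable (fun x : ℕ → S => e (x 0)) :=
    (Measurable.of_discrete (f := e)).comp (measurable_pi_apply 0)
  have hfin : (Set.range (fun x : ℕ → S => e (x 0))).Finite :=
    R.finite_toSet.subset (by rintro _ ⟨x, rfl⟩; exact hR x)
  have hent := vpMu_ent p hp hn w hinj e he R hR
  set Hp := ∑ c, Real.negMulLog (p.real {c}) with hHp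
  set μ := vpMu p n w with hμ
  have hn' : (0 : ℝ) < n := by exact_mod_cast hn
  have key : ∀ N : ℕ, 0 < N → Hp / n ≤
      vpEnt μ (vpBlk (fun x : ℕ → S => e (x 0)) R hR N) / N := by
    intro N hN
    have hN' : (0 : ℝ) < N := by exact_mod_cast hN
    set v := vpEnt μ (vpBlk (fun x : ℕ → S => e (x 0)) R hR N) with hv
    rw [div_le_div_iff₀ hn' hN']
    by_contra hcon
    push Not at hcon
    obtain ⟨k, hk⟩ := exists_nat_gt (Hp / (Hp * N - v * n))
    rw [div_lt_iff₀ (by linarith)] at hk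
    have h1 := hent ((k + 1) * N)
    have h2 := vpEnt_mul μ hinv _ hP R hR N ((k + 1) * n)
    rw [show (k + 1) * n * N = (k + 1) * N * n by ring] at h2
    have h3 := h1.trans h2
    have h4 : 1 ≤ (k + 1) * N := Nat.mul_pos (Nat.succ_pos k) hN
    rw [Nat.cast_sub h4] at h3
    push_cast at h3
    rw [← hv] at h3
    nlinarith
  unfold hKS
  refine le_iSup_of_le ⟨fun x : ℕ → S => e (x 0), hP, hfin⟩ (le_iInf fun N => ?_)
  rw [vp_blockEnt μ _ R hR]
  have h5 := key (N + 1) (Nat.succ_pos N)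
  refine (ENNReal.ofReal_le_ofReal h5).trans ?_
  rw [ENNReal.ofReal_div_of_pos (by positivity)]
  rw [ENNReal.ofReal_natCast]
  push_cast
  exact le_rfl


section
variable {S K : Type*} {T : S → S → Prop} {f : ℕ → (ℕ → S) → ℝ} {D C E : ℝ}

lemma vpPhi_lo (H : VPHyp T f D C E) {n : ℕ} (hn : 0 < n) {w : K → ℕ → S} {a : S}
    (hw : ∀ k, w k ∈ shiftSpace T) (hw0 : ∀ k, w k 0 = a) (hwn : ∀ k, w k n = a)
    (ω : ℕ → K) (k : ℕ) :
    ∑ j ∈ Finset.range (k + 1), Real.log (f n (w (ω j))) - (k + 1) * (|C| + |D|) ≤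
      Real.log (f ((k + 1) * n) (vpPhi n w ω)) := by
  have hone : ∀ ω : ℕ → K, Real.log (f n (w (ω 0))) ≤
      |D| + Real.log (f n (vpPhi n w ω)) := by
    intro ω
    have := H.bow n hn (w (ω 0)) (hw _) (vpPhi n w ω) (vpPhi_mem hn hw hw0 hwn ω) (fun i hi => by
      have := vpPhi_blk w ω (k := 0) hi
      simpa using this.symm)
    linarith [le_abs_self D]
  induction k with
  | zero =>
    have := hone ω
    simp
    linarith [abs_nonneg C]
  | succ k ih =>
    rw [Finset.sum_range_succ]
    have h1 := H.lo ((k + 1) * n) n (by positivity) hn _ (vpPhi_mem hn hw hw0 hwn ω)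
    rw [vpPhi_iter hn] at h1
    have h2 := hone (shf^[k + 1] ω)
    rw [vp_shf_iter, zero_add] at h2
    rw [show (k + 1 + 1) * n = (k + 1) * n + n by ring]
    push_cast
    linarith [le_abs_self C]

lemma vpPhi_lo' [Fintype K] (H : VPHyp T f D C E) {n : ℕ} (hn : 0 < n) {w : K → ℕ → S} {a : S}
    (hw : ∀ k, w k ∈ shiftSpace T) (hw0 : ∀ k, w k 0 = a) (hwn : ∀ k, w k n = a) :
    ∃ c : ℝ, ∀ i < n, ∀ (ω : ℕ → K) (k : ℕ),
    ∑ j ∈ Finset.range (k + 1), Real.log (f n (w (ω j))) - (k + 1) * (|C| + |D|) - c ≤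
      Real.log (f ((k + 1) * n) (shf^[i] (vpPhi n w ω))) := by
  set c0 : ℝ := ∑ i ∈ Finset.range n, ∑ k, |Real.log (f i (w k))| with hc0
  have hc0' : ∀ i < n, ∀ k, |Real.log (f i (w k))| ≤ c0 := by
    intro i hi k
    refine (Finset.single_le_sum (f := fun k => |Real.log (f i (w k))|)
      (fun _ _ => abs_nonneg _) (Finset.mem_univ k)).trans ?_
    exact Finset.single_le_sum (f := fun i => ∑ k, |Real.log (f i (w k))|)
      (fun _ _ => Finset.sum_nonneg fun _ _ => abs_nonneg _) (Finset.mem_range.2 hi)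
  have hc00 : 0 ≤ c0 := Finset.sum_nonneg fun _ _ => Finset.sum_nonneg fun _ _ => abs_nonneg _
  refine ⟨2 * |C| + n * E + |D| + c0, fun i hi ω k => ?_⟩
  have h0 := vpPhi_lo H hn hw hw0 hwn ω k
  have hE := H.E0
  have hnE : (0 : ℝ) ≤ n * E := by positivity
  rcases Nat.eq_zero_or_pos i with rfl | hi0
  · simp only [Function.iterate_zero, id]
    linarith [abs_nonneg C, abs_nonneg D]
  have hkn : 0 < (k + 1) * n := by positivity
  have hm := vpPhi_mem hn hw hw0 hwn ω
  have h1 := H.up i ((k + 1) * n) hi0 hkn _ hm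
  have h2 := H.lo ((k + 1) * n) i hkn hi0 _ hm
  rw [vpPhi_iter hn] at h2
  rw [add_comm i] at h1
  have h3 := H.bd i hi0 _ hm
  have h4 : (i : ℝ) * E ≤ n * E := by
    have : (i : ℝ) ≤ n := by exact_mod_cast hi.le
    gcongr
  have h5 := H.bow i hi0 (w (shf^[k + 1] ω 0)) (hw _) (vpPhi n w (shf^[k + 1] ω))
    (vpPhi_mem hn hw hw0 hwn _) (fun j hj => by
      have := vpPhi_blk w (shf^[k + 1] ω) (k := 0) (hj.trans hi)
      simpa using this.symm)
  have h6 := (abs_le.1 (hc0' i hi (shf^[k + 1] ω 0))).1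
  linarith [le_abs_self C, le_abs_self D]

variable [MeasurableSpace S] [Fintype K] [MeasurableSpace K]
    [MeasurableSingletonClass K] (p : Measure K) [IsProbabilityMeasure p]

lemma vpMu_int (H : VPHyp T f D C E) (hmeas : ∀ n, Measurable (f n)) {n : ℕ} (hn : 0 < n)
    {w : K → ℕ → S} {a : S}
    (hw : ∀ k, w k ∈ shiftSpace T) (hw0 : ∀ k, w k 0 = a) (hwn : ∀ k, w k n = a) :
    ∃ c : ℝ, ∀ k : ℕ,
    Integrable (fun x => Real.log (f ((k + 1) * n) x)) (vpMu p n w) ∧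
    (k + 1) * (∑ c, p.real {c} * Real.log (f n (w c)) - (|C| + |D|)) - c ≤
      ∫ x, Real.log (f ((k + 1) * n) x) ∂(vpMu p n w) := by
  obtain ⟨c, hc⟩ := vpPhi_lo' H hn hw hw0 hwn
  refine ⟨c, fun k => ?_⟩
  have hkn : 0 < (k + 1) * n := by positivity
  set g : (ℕ → S) → ℝ := fun x => Real.log (f ((k + 1) * n) x) with hg
  have hgm : Measurable g := Real.measurable_log.comp (hmeas _)
  set m := Measure.infinitePi (fun _ : ℕ => p) with hm
  have hI := vp_iid_int p (Finset.range (k + 1)) (fun c => Real.log (f n (w c)))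
  have hIl : Integrable (fun ω : ℕ → K => ∑ j ∈ Finset.range (k + 1), Real.log (f n (w (ω j)))
      - (k + 1) * (|C| + |D|) - c) m :=
    (hI.1.sub (integrable_const _)).sub (integrable_const _)
  have hub : ∀ i (ω : ℕ → K), g (shf^[i] (vpPhi n w ω)) ≤ ((k + 1) * n : ℕ) * E := fun i ω =>
    H.bd _ hkn _ (vp_shf_mem (vpPhi_mem hn hw hw0 hwn ω) i)
  have hgint : ∀ i < n, Integrable (fun ω => g (shf^[i] (vpPhi n w ω))) m := by
    intro i hi
    refine integrable_of_le_of_le (hgm.comp (vpNu_meas n w i)).aestronglyMeasurable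
      (Eventually.of_forall fun ω => hc i hi ω k) (Eventually.of_forall fun ω => hub i ω) hIl
      (integrable_const _)
  have hint2 : ∀ i ∈ Finset.range n, Integrable g (vpNu p n w i) := by
    intro i hi
    unfold vpNu
    rw [integrable_map_measure hgm.aestronglyMeasurable (vpNu_meas n w i).aemeasurable]
    exact hgint i (Finset.mem_range.1 hi)
  have hlow : ∀ i ∈ Finset.range n,
      (k + 1) * (∑ c, p.real {c} * Real.log (f n (w c)) - (|C| + |D|)) - c ≤
      ∫ x, g x ∂(vpNu p n w i) := by
    intro i hi
    unfold vpNu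
    rw [integral_map (vpNu_meas n w i).aemeasurable hgm.aestronglyMeasurable]
    refine le_trans (le_of_eq ?_) (integral_mono hIl (hgint i (Finset.mem_range.1 hi))
      fun ω => hc i (Finset.mem_range.1 hi) ω k)
    have hI2 : Integrable (fun ω : ℕ → K => ∑ j ∈ Finset.range (k + 1), Real.log (f n (w (ω j)))
      - (k + 1) * (|C| + |D|)) m := hI.1.sub (integrable_const _)
    rw [integral_sub hI2 (integrable_const _), integral_sub hI.1 (integrable_const _), hI.2]
    simp
    ring
  have hn' : (0 : ℝ) < n := by exact_mod_cast hn
  constructor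
  · unfold vpMu
    refine Integrable.smul_measure ?_ (by simp [hn.ne'])
    exact integrable_finsetSum_measure.2 hint2
  · unfold vpMu
    rw [integral_smul_measure, integral_finsetSum_measure hint2]
    have := Finset.sum_le_sum hlow
    rw [Finset.sum_const, Finset.card_range, nsmul_eq_mul] at this
    simp only [ENNReal.toReal_inv, ENNReal.toReal_natCast, smul_eq_mul]
    rw [inv_mul_eq_div, le_div_iff₀ hn']
    linarith

lemma vpMu_lyap (H : VPHyp T f D C E) (hmeas : ∀ n, Measurable (f n)) {n : ℕ} (hn : 0 < n)
    {w : K → ℕ → S} {a : S}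
    (hw : ∀ k, w k ∈ shiftSpace T) (hw0 : ∀ k, w k 0 = a) (hwn : ∀ k, w k n = a) :
    (((∑ c, p.real {c} * Real.log (f n (w c)) - (|C| + |D|)) / n : ℝ) : EReal) ≤
      lyap (vpMu p n w) f := by
  obtain ⟨c, hc⟩ := vpMu_int p H hmeas hn hw hw0 hwn
  set A := ∑ c, p.real {c} * Real.log (f n (w c)) - (|C| + |D|) with hA
  have hn' : (0 : ℝ) < n := by exact_mod_cast hn
  refine EReal.ge_of_forall_gt_iff_ge.1 fun r hr => ?_
  have hr' : r < A / n := by exact_mod_cast hr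
  unfold lyap
  refine le_limsup_of_frequently_le ?_
  rw [frequently_atTop]
  intro N
  obtain ⟨k0, hk0⟩ := exists_nat_gt (c / (A - r * n))
  have hpos : 0 < A - r * n := by
    rw [lt_div_iff₀ hn'] at hr'; linarith
  rw [div_lt_iff₀ hpos] at hk0
  set k := max k0 N with hk
  have hk1 : (k0 : ℝ) ≤ k := by exact_mod_cast le_max_left _ _
  refine ⟨(k + 1) * n, ?_, ?_⟩
  · have : N ≤ k := le_max_right _ _
    nlinarith
  · rw [vp_L_int _ _ (hc k).1, ← EReal.coe_div, EReal.coe_le_coe_iff,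
      le_div_iff₀ (by positivity)]
    have h := (hc k).2
    push_cast
    nlinarith

end


lemma vp_exists_p {K : Type*} [Fintype K] [MeasurableSpace K] [MeasurableSingletonClass K]
    (q : K → ℝ) (hq : ∀ c, 0 < q c) (h1 : ∑ c, q c = 1) :
    ∃ p : Measure K, IsProbabilityMeasure p ∧ ∀ c, p.real {c} = q c := by
  classical
  refine ⟨∑ c, ENNReal.ofReal (q c) • Measure.dirac c, ⟨?_⟩, fun c => ?_⟩
  · simp only [Measure.finsetSum_apply, Measure.smul_apply, measure_univ, smul_eq_mul, mul_one]
    rw [← ENNReal.ofReal_sum_of_nonneg (fun c _ => (hq c).le), h1, ENNReal.ofReal_one]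
  · simp only [measureReal_def, Measure.finsetSum_apply, Measure.smul_apply, smul_eq_mul]
    rw [Finset.sum_eq_single c]
    · simp [(hq c).le]
    · intro b _ hb
      simp [hb]
    · simp

lemma vp_meas_space {S : Type*} [Countable S] [MeasurableSpace S] [MeasurableSingletonClass S]
    (T : S → S → Prop) : MeasurableSet (shiftSpace T) := by
  have : shiftSpace T = ⋂ i : ℕ, (fun x : ℕ → S => (x i, x (i + 1))) ⁻¹' {q : S × S | T q.1 q.2} := by
    ext x; simp [shiftSpace]
  rw [this]
  exact MeasurableSet.iInter fun i =>
    ((measurable_pi_apply i).prodMk (measurable_pi_apply (i + 1))) (Set.to_countable _).measurableSet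

lemma vp_lower {S : Type*} [Countable S] [MeasurableSpace S] [MeasurableSingletonClass S]
    {T : S → S → Prop} {f : ℕ → (ℕ → S) → ℝ} {D C E : ℝ} (H : VPHyp T f D C E)
    (hmeas : ∀ n, Measurable (f n)) (a : S) (B : ℝ) (hB : (B : EReal) < press T f a) :
    ∃ μ : Measure (ℕ → S), (IsProbabilityMeasure μ ∧
          (∀ s : Set (ℕ → S), MeasurableSet s → μ (shf ⁻¹' s) = μ s) ∧
          μ (shiftSpace T) = 1 ∧ lyap μ f ≠ ⊥) ∧ (B : EReal) ≤ (hKS μ : EReal) + lyap μ f := by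
  classical
  obtain ⟨B', hB1, hB2⟩ := EReal.lt_iff_exists_real_btwn.1 hB
  have hBB : B < B' := by exact_mod_cast hB1
  have hfr : ∃ᶠ n : ℕ in atTop,
      (B' : EReal) < ENNReal.log (ZFun T f n a) / ((n : ℝ) : EReal) :=
    frequently_lt_of_lt_limsup (by isBoundedDefault) hB2
  obtain ⟨n0, hn0⟩ := exists_nat_gt ((|C| + |D|) / (B' - B))
  obtain ⟨n, hnB, hnn⟩ := (hfr.and_eventually (eventually_ge_atTop (n0 + 1))).exists
  have hn : 0 < n := by omega
  have hn' : (0 : ℝ) < n := by exact_mod_cast hn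
  have hnc : |C| + |D| ≤ n * (B' - B) := by
    rw [div_lt_iff₀ (by linarith)] at hn0
    have : (n0 : ℝ) ≤ n := by exact_mod_cast (by omega : n0 ≤ n)
    nlinarith
  have hZ : ENNReal.ofReal (Real.exp (n * B')) < ZFun T f n a := by
    rw [← ENNReal.log_lt_log_iff, ENNReal.log_ofReal_of_pos (Real.exp_pos _), Real.log_exp]
    by_contra hcon
    exact absurd ((vp_div_le hn).2 (not_lt.1 hcon)) (not_le.2 hnB)
  unfold ZFun at hZ
  rw [ENNReal.tsum_eq_iSup_sum] at hZ
  obtain ⟨s, hs⟩ := lt_iSup_iff.1 hZ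
  set w : s → ℕ → S := fun k => k.1.1 with hwdef
  have hw : ∀ k, w k ∈ shiftSpace T := fun k => k.1.2.1
  have hper : ∀ k, shf^[n] (w k) = w k := fun k => k.1.2.2.1
  have hw0 : ∀ k, w k 0 = a := fun k => k.1.2.2.2
  have hwp : ∀ k, Function.Periodic (w k) n := fun k j => by
    have := congrFun (hper k) j
    rwa [vp_shf_iter] at this
  have hwn : ∀ k, w k n = a := fun k => by
    have := hwp k 0
    rw [zero_add, hw0] at this
    exact this
  have hinj : ∀ k k', (∀ i < n, w k i = w k' i) → k = k' := by
    intro k k' h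
    apply Subtype.ext
    apply Subtype.ext
    change w k = w k'
    funext j
    rw [← (hwp k).map_mod_nat j, ← (hwp k').map_mod_nat j]
    exact h _ (Nat.mod_lt _ hn)
  set Z : ℝ := ∑ k : s, f n (w k) with hZdef
  have hfp : ∀ k, 0 < f n (w k) := fun k => H.pos n hn _ (hw k)
  have hZ1 : Real.exp (n * B') < Z := by
    rw [← Finset.sum_coe_sort, ← ENNReal.ofReal_sum_of_nonneg (fun k _ => (hfp k).le)] at hs
    exact (ENNReal.ofReal_lt_ofReal_iff_of_nonneg (Real.exp_pos _).le).1 hs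
  have hZ0 : 0 < Z := (Real.exp_pos _).trans hZ1
  have hlogZ : n * B' ≤ Real.log Z := by
    rw [Real.le_log_iff_exp_le hZ0]; exact hZ1.le
  have hq1 : ∑ k, f n (w k) / Z = 1 := by
    rw [← Finset.sum_div]; exact div_self hZ0.ne'
  obtain ⟨p, hp, hpq⟩ := vp_exists_p (fun k => f n (w k) / Z) (fun k => div_pos (hfp k) hZ0) hq1
  have hpp : ∀ c, 0 < p.real {c} := fun c => by rw [hpq]; exact div_pos (hfp c) hZ0
  have h1 := vpMu_hKS p hpp hn w hinj
  have h2 := vpMu_lyap p H hmeas hn hw hw0 hwn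
  have hHp : 0 ≤ ∑ c, Real.negMulLog (p.real {c}) :=
    Finset.sum_nonneg fun c _ => Real.negMulLog_nonneg measureReal_nonneg measureReal_le_one
  have hsum : ∑ c, Real.negMulLog (p.real {c}) + ∑ c, p.real {c} * Real.log (f n (w c)) =
      Real.log Z := by
    rw [← Finset.sum_add_distrib]
    calc _ = ∑ k, f n (w k) / Z * Real.log Z := by
          refine Finset.sum_congr rfl fun c _ => ?_
          rw [hpq, Real.negMulLog, Real.log_div (hfp c).ne' hZ0.ne']
          ring
      _ = _ := by rw [← Finset.sum_mul, hq1, one_mul]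
  have hprob := vpMu_prob p hn w
  refine ⟨vpMu p n w, ⟨hprob, vpMu_inv p hn w, ?_, ?_⟩, ?_⟩
  · have := vpMu_ae p n w (Q := fun x => x ∈ shiftSpace T) fun i _ =>
      vpNu_ae p n w i (vp_meas_space T) fun ω => vp_shf_mem (vpPhi_mem hn hw hw0 hwn ω) i
    exact (prob_compl_eq_zero_iff (vp_meas_space T)).1 this
  · intro h
    rw [h, le_bot_iff] at h2
    exact EReal.coe_ne_bot _ h2
  · have h1' : ((((∑ c, Real.negMulLog (p.real {c})) / n : ℝ)) : EReal) ≤ (hKS (vpMu p n w) : EReal) := by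
      have := EReal.coe_ennreal_le_coe_ennreal_iff.2 h1
      rwa [EReal.coe_ennreal_ofReal, max_eq_left (by positivity)] at this
    refine le_trans ?_ (add_le_add h1' h2)
    rw [← EReal.coe_add, EReal.coe_le_coe_iff, ← add_div, le_div_iff₀ hn']
    linarith

/-- The variational principle for the almost-additive Gurevich pressure. -/
theorem variational_principle {S : Type*} [Countable S] [MeasurableSpace S]
    [MeasurableSingletonClass S] (T : S → S → Prop)
    (hmix : ∀ a b : S, ∃ N : ℕ, ∀ n > N, ∃ x ∈ shiftSpace T, x 0 = a ∧ x n = b)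
    (f : ℕ → (ℕ → S) → ℝ) (hmeas : ∀ n, Measurable (f n)) (M C : ℝ) (hM : 0 < M) (hC : 0 ≤ C)
    (hpos : ∀ n, 0 < n → ∀ x ∈ shiftSpace T, 0 < f n x)
    (hBowen : ∀ n, 0 < n → ∀ x ∈ shiftSpace T, ∀ y ∈ shiftSpace T,
      (∀ i < n, x i = y i) → f n x ≤ M * f n y)
    (hAA : ∀ n m, 0 < n → 0 < m → ∀ x ∈ shiftSpace T,
      f n x * f m (shf^[n] x) * Real.exp (-C) ≤ f (n + m) x ∧
        f (n + m) x ≤ Real.exp C * (f n x * f m (shf^[n] x)))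
    (hsup : ∃ K : ℝ, ∀ x ∈ shiftSpace T, f 1 x ≤ K) :
    ∀ a : S, press T f a =
      ⨆ (μ : Measure (ℕ → S)) (_ : IsProbabilityMeasure μ ∧
          (∀ s : Set (ℕ → S), MeasurableSet s → μ (shf ⁻¹' s) = μ s) ∧
          μ (shiftSpace T) = 1 ∧ lyap μ f ≠ ⊥),
        ((hKS μ : EReal) + lyap μ f) := by
  obtain ⟨E, H⟩ := vp_hyp T hmix f M C hM hC hpos hBowen hAA hsup
  intro a
  apply le_antisymm
  · refine EReal.ge_of_forall_gt_iff_ge.1 fun B hB => ?_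
    obtain ⟨μ, hμ, hle⟩ := vp_lower H hmeas a B hB
    exact hle.trans (le_iSup₂_of_le μ hμ le_rfl)
  · refine iSup₂_le fun μ hμ => ?_
    obtain ⟨hp, hinv, h1, hly⟩ := hμ
    have hSS : ∀ᵐ x ∂μ, x ∈ shiftSpace T :=
      (prob_compl_eq_zero_iff (vp_meas_space T)).2 h1
    exact vp_upper H hmeas a μ hinv hSS hly
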